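/- arXiv:1311.3781 — 5 statements merged into one kernel-verified Lean document; each statement's English description precedes it below -/
import Mathlib

section
/- Let φ be a subharmonic function on the unit disc Δ ⊂ ℂ with φ(z) < 0 for every z ∈ Δ, and let F be a holomorphic function on Δ satisfying ∫_{Δ} |F|² e^{−φ} dλ₁ < +∞. Then there exist r ∈ (0,1) and p > 1 such that ∫_{Δ_r} |F|² e^{−pφ} dλ₁ < +∞. -/
open MeasureTheory Set Filter ENNReal Complex

/-- `φ : Δ → [−∞, +∞)` is subharmonic on `D ⊆ ℂ`: it is upper semicontinuous,
nowhere `+∞`, not identically `−∞` on any connected component, and satisfies the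
sub-mean value inequality `φ(z₀) ≤ (1/2π) ∫₀^{2π} φ(z₀ + ρ e^{iθ}) dθ` whenever
the closed disc of radius `ρ` about `z₀` lies in `D`.  (For the extended-real
valued `φ`, the circle mean is encoded through its truncations `φ ⊔ M`, `M ∈ ℝ`,
which are real-valued and decrease to `φ`; this is equivalent to the usual
inequality since `φ` is bounded above on the compact circle.) -/
def SubharmonicOn (φ : ℂ → EReal) (D : Set ℂ) : Prop :=
  UpperSemicontinuousOn φ D ∧
  (∀ z ∈ D, φ z ≠ ⊤) ∧
  (∀ z ∈ D, ∃ y ∈ connectedComponentIn D z, φ y ≠ ⊥) ∧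
  ∀ z₀ ∈ D, ∀ ρ : ℝ, 0 < ρ → (∀ t : ℂ, ‖t‖ ≤ ρ → z₀ + t ∈ D) →
    ∀ M : ℝ, φ z₀ ≤
      (((2 * Real.pi)⁻¹ * ∫ θ in (0 : ℝ)..(2 * Real.pi),
        (φ (z₀ + (ρ : ℂ) * Complex.exp (θ * Complex.I)) ⊔ (M : EReal)).toReal : ℝ) : EReal)

namespace SO

/-- bounded measurable function with bounded support -/
structure BS (v : ℂ → ℝ) : Prop where
  meas : Measurable v
  bdd : ∃ B, ∀ z, |v z| ≤ B
  supp : ∃ T, ∀ z, T < ‖z‖ → v z = 0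

/-- locally bounded measurable function -/
structure Nice (f : ℂ → ℝ) : Prop where
  meas : Measurable f
  bdd : ∀ T, ∃ C, ∀ z, ‖z‖ ≤ T → |f z| ≤ C

/-- locally integrable measurable kernel -/
structure LI (k : ℂ → ℝ) : Prop where
  meas : Measurable k
  int : ∀ T, IntegrableOn k (Metric.ball 0 T)

instance finu : IsFiniteMeasure (volume.restrict (Set.uIoc (0:ℝ) (2 * Real.pi))) := by
  unfold Set.uIoc; infer_instance

noncomputable def cv (k v : ℂ → ℝ) (z : ℂ) : ℝ := ∫ w, k w * v (z - w)

noncomputable def kap (h : ℝ) (w : ℂ) : ℝ := max (Real.log h - Real.log ‖w‖) 0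

lemma BS.nice {v : ℂ → ℝ} (hv : BS v) : Nice v :=
  ⟨hv.meas, fun _ => ⟨hv.bdd.choose, fun z _ => hv.bdd.choose_spec z⟩⟩

lemma Nice.circ {f : ℂ → ℝ} (hf : Nice f) (z : ℂ) (h : ℝ) : CircleIntegrable f z h := by
  obtain ⟨C, hC⟩ := hf.bdd (‖z‖ + |h|)
  have hm : Measurable fun θ : ℝ => f (circleMap z h θ) :=
    hf.meas.comp (continuous_circleMap z h).measurable
  unfold CircleIntegrable
  refine (intervalIntegrable_const (c := C)).mono_fun' hm.aestronglyMeasurable ?_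
  refine Filter.Eventually.of_forall fun θ => ?_
  refine hC _ ?_
  calc ‖circleMap z h θ‖ ≤ ‖z‖ + ‖circleMap 0 h θ‖ := by
        rw [← circleMap_sub_center z h θ]
        have := norm_add_le z (circleMap z h θ - z)
        rwa [add_sub_cancel] at this
    _ = _ := by simp

lemma meas_circ {f : ℂ → ℝ} (hf : Measurable f) (h : ℝ) :
    Measurable fun z => Real.circleAverage f z h := by
  unfold Real.circleAverage
  simp only [intervalIntegral.integral_of_le Real.two_pi_pos.le, smul_eq_mul]
  refine Measurable.const_mul ?_ _
  refine StronglyMeasurable.measurable (StronglyMeasurable.integral_prod_right ?_)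
  refine Measurable.stronglyMeasurable ?_
  refine hf.comp ?_
  refine Continuous.measurable ?_
  unfold circleMap
  fun_prop

lemma norm_circleMap_le (z : ℂ) (h θ : ℝ) : ‖circleMap z h θ‖ ≤ ‖z‖ + |h| := by
  calc ‖circleMap z h θ‖ ≤ ‖z‖ + ‖circleMap 0 h θ‖ := by
        rw [← circleMap_sub_center z h θ]
        have := norm_add_le z (circleMap z h θ - z)
        rwa [add_sub_cancel] at this
    _ = _ := by simp

lemma abs_circ_le {f : ℂ → ℝ} {z : ℂ} {h C : ℝ}
    (hC : ∀ θ : ℝ, |f (circleMap z h θ)| ≤ C) : |Real.circleAverage f z h| ≤ C := by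
  unfold Real.circleAverage
  have h1 := intervalIntegral.norm_integral_le_of_norm_le_const (a := 0) (b := 2 * Real.pi)
    (f := fun θ => f (circleMap z h θ)) (C := C) (fun θ _ => hC θ)
  rw [Real.norm_eq_abs, sub_zero, abs_of_pos Real.two_pi_pos] at h1
  rw [smul_eq_mul, abs_mul, abs_of_pos (inv_pos.2 Real.two_pi_pos)]
  have := Real.two_pi_pos
  rw [inv_mul_le_iff₀ this]
  linarith

lemma Nice.avg {f : ℂ → ℝ} (hf : Nice f) (h : ℝ) : Nice fun z => Real.circleAverage f z h := by
  refine ⟨meas_circ hf.meas h, fun T => ?_⟩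
  obtain ⟨C, hC⟩ := hf.bdd (T + |h|)
  refine ⟨C, fun z hz => abs_circ_le fun θ => hC _ ?_⟩
  linarith [norm_circleMap_le z h θ]

lemma norm_le_circleMap (z : ℂ) (h θ : ℝ) : ‖z‖ - |h| ≤ ‖circleMap z h θ‖ := by
  have h1 : ‖z‖ - ‖circleMap 0 h θ‖ ≤ ‖circleMap z h θ‖ := by
    rw [← circleMap_sub_center z h θ]
    have := norm_sub_norm_le z (z - circleMap z h θ)
    rw [norm_sub_rev z] at this
    simpa using this
  simpa using h1

lemma BS.avg {v : ℂ → ℝ} (hv : BS v) (h : ℝ) : BS fun z => Real.circleAverage v z h := by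
  obtain ⟨B, hB⟩ := hv.bdd
  obtain ⟨T, hT⟩ := hv.supp
  refine ⟨meas_circ hv.meas h, ⟨B, fun z => abs_circ_le fun θ => hB _⟩, T + |h|, fun z hz => ?_⟩
  have : |Real.circleAverage v z h| ≤ 0 := abs_circ_le fun θ => by
    rw [hT]; · simp
    linarith [norm_le_circleMap z h θ]
  exact abs_nonpos_iff.1 this

lemma BS.sub {v w : ℂ → ℝ} (hv : BS v) (hw : BS w) : BS fun z => v z - w z := by
  obtain ⟨B, hB⟩ := hv.bdd
  obtain ⟨T, hT⟩ := hv.supp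
  obtain ⟨B', hB'⟩ := hw.bdd
  obtain ⟨T', hT'⟩ := hw.supp
  refine ⟨hv.meas.sub hw.meas, ⟨B + B', fun z => ?_⟩, max T T', fun z hz => ?_⟩
  · exact (abs_sub _ _).trans (add_le_add (hB z) (hB' z))
  · rw [hT z (lt_of_le_of_lt (le_max_left _ _) hz), hT' z (lt_of_le_of_lt (le_max_right _ _) hz),
      sub_zero]

/-- domination -/
lemma dom {k v : ℂ → ℝ} (hk : LI k) (hv : BS v) (T : ℝ) :
    ∃ g : ℂ → ℝ, Integrable g ∧ ∀ z w, ‖z‖ ≤ T → |k w * v (z - w)| ≤ g w := by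
  obtain ⟨B, hB⟩ := hv.bdd
  obtain ⟨S, hS⟩ := hv.supp
  refine ⟨(Metric.ball 0 (T + S + 1)).indicator fun w => |k w| * B, ?_, fun z w hz => ?_⟩
  · rw [integrable_indicator_iff measurableSet_ball]
    exact ((hk.int _).abs).mul_const B
  · have hB0 : 0 ≤ B := (abs_nonneg _).trans (hB 0)
    by_cases hw : w ∈ Metric.ball (0 : ℂ) (T + S + 1)
    · rw [indicator_of_mem hw, abs_mul]
      exact mul_le_mul_of_nonneg_left (hB _) (abs_nonneg _)
    · rw [indicator_of_notMem hw, hS]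
      · simp
      · simp only [Metric.mem_ball, dist_zero_right, not_lt] at hw
        have := norm_sub_norm_le w z
        rw [norm_sub_rev] at this
        linarith

lemma cv_int {k v : ℂ → ℝ} (hk : LI k) (hv : BS v) (z : ℂ) :
    Integrable fun w => k w * v (z - w) := by
  obtain ⟨g, hg, h⟩ := dom hk hv ‖z‖
  refine hg.mono' ?_ (Filter.Eventually.of_forall fun w => h z w le_rfl)
  exact (hk.meas.mul (hv.meas.comp (measurable_const.sub measurable_id))).aestronglyMeasurable

lemma Nice.cv {k v : ℂ → ℝ} (hk : LI k) (hv : BS v) : Nice (cv k v) := by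
  constructor
  · unfold SO.cv
    refine StronglyMeasurable.measurable (StronglyMeasurable.integral_prod_right ?_)
    refine Measurable.stronglyMeasurable ?_
    exact (hk.meas.comp measurable_snd).mul (hv.meas.comp (measurable_fst.sub measurable_snd))
  · intro T
    obtain ⟨g, hg, h⟩ := dom hk hv T
    refine ⟨∫ w, g w, fun z hz => ?_⟩
    unfold SO.cv
    rw [← Real.norm_eq_abs]
    exact norm_integral_le_of_norm_le hg (Filter.Eventually.of_forall fun w => h z w hz)

lemma cv_swap (k v : ℂ → ℝ) (z : ℂ) : cv k v z = ∫ w, k (z - w) * v w := by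
  unfold cv
  rw [← integral_sub_left_eq_self (fun w => k w * v (z - w)) volume z]
  simp

/-- circle averages pass to the second factor -/
lemma avg_cv {k v : ℂ → ℝ} (hk : LI k) (hv : BS v) (h : ℝ) (z : ℂ) :
    Real.circleAverage (cv k v) z h = cv k (fun z => Real.circleAverage v z h) z := by
  unfold Real.circleAverage cv
  rw [intervalIntegral_integral_swap]
  · simp only [smul_eq_mul]
    rw [← integral_const_mul]
    refine integral_congr_ae (Filter.Eventually.of_forall fun w => ?_)
    simp only [intervalIntegral.integral_const_mul]
    have : ∀ θ, circleMap z h θ - w = circleMap (z - w) h θ := fun θ => by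
      unfold circleMap; ring
    simp only [this]
    ring
  · obtain ⟨g, hg, hd⟩ := dom hk hv (‖z‖ + |h|)
    refine Integrable.mono' (hg.comp_snd (volume.restrict (Set.uIoc 0 (2 * Real.pi)))) ?_ ?_
    · refine Measurable.aestronglyMeasurable ?_
      refine (hk.meas.comp measurable_snd).mul (hv.meas.comp ?_)
      exact ((continuous_circleMap z h).measurable.comp measurable_fst).sub measurable_snd
    · exact Filter.Eventually.of_forall fun p => hd _ _ (norm_circleMap_le z h _)

/-- circle averages pass to the first factor -/
lemma avg_cv' {k v : ℂ → ℝ} (hk : LI k) (hv : BS v) (h : ℝ) (z : ℂ) :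
    Real.circleAverage (cv k v) z h = cv (fun z => Real.circleAverage k z h) v z := by
  rw [cv_swap]
  unfold Real.circleAverage
  simp only [cv_swap]
  have hm : Measurable (Function.uncurry fun (θ : ℝ) (w : ℂ) => k (circleMap z h θ - w) * v w) := by
    refine (hk.meas.comp ?_).mul (hv.meas.comp measurable_snd)
    exact ((continuous_circleMap z h).measurable.comp measurable_fst).sub measurable_snd
  rw [intervalIntegral_integral_swap]
  · simp only [smul_eq_mul]
    rw [← integral_const_mul]
    refine integral_congr_ae (Filter.Eventually.of_forall fun w => ?_)
    simp only [intervalIntegral.integral_mul_const]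
    have : ∀ θ, circleMap z h θ - w = circleMap (z - w) h θ := fun θ => by
      unfold circleMap; ring
    simp only [this]
    ring
  · obtain ⟨g, hg, hd⟩ := dom hk hv (‖z‖ + |h|)
    rw [integrable_prod_iff hm.aestronglyMeasurable]
    constructor
    · refine Filter.Eventually.of_forall fun θ => ?_
      have := (cv_int hk hv (circleMap z h θ)).comp_sub_left (circleMap z h θ)
      simpa using this
    · refine Integrable.mono' (g := fun _ => ∫ w, g w) (integrable_const _) ?_ ?_
      · exact (hm.norm.stronglyMeasurable.integral_prod_right (f := fun (θ : ℝ) (w : ℂ) =>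
          ‖k (circleMap z h θ - w) * v w‖)).aestronglyMeasurable
      · refine Filter.Eventually.of_forall fun θ => ?_
        rw [Real.norm_of_nonneg (integral_nonneg fun _ => norm_nonneg _)]
        simp only [Function.uncurry]
        have e := integral_sub_left_eq_self (fun w => ‖k w * v (circleMap z h θ - w)‖) volume
          (circleMap z h θ)
        simp only [_root_.sub_sub_cancel] at e
        rw [e]
        exact integral_mono (cv_int hk hv _).norm hg
          (fun w => hd _ w (norm_circleMap_le z h _))

lemma avg_comm {f : ℂ → ℝ} (hf : Nice f) (h R : ℝ) (z : ℂ) :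
    Real.circleAverage (fun y => Real.circleAverage f y h) z R =
    Real.circleAverage (fun y => Real.circleAverage f y R) z h := by
  obtain ⟨C, hC⟩ := hf.bdd (‖z‖ + |R| + |h|)
  unfold Real.circleAverage
  simp only [smul_eq_mul, intervalIntegral.integral_const_mul]
  congr 2
  simp only [intervalIntegral.integral_of_le Real.two_pi_pos.le]
  rw [integral_integral_swap]
  · congr 1
    ext θ
    congr 1
    ext τ
    congr 1
    unfold circleMap; ring
  · refine Integrable.mono' (g := fun _ => C) (integrable_const C) ?_ ?_
    · refine Measurable.aestronglyMeasurable (hf.meas.comp ?_)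
      refine Continuous.measurable ?_
      unfold circleMap; fun_prop
    · refine Filter.Eventually.of_forall fun p => hC _ ?_
      linarith [norm_circleMap_le (circleMap z R p.1) h p.2, norm_circleMap_le z R p.1]

lemma finrank_C : (Module.finrank ℝ ℂ : ℝ) = 2 := by simp

lemma LI_log : LI fun w => Real.log ‖w‖ := by
  refine ⟨by fun_prop, fun T => ?_⟩
  have h1 : IntegrableOn (fun w : ℂ => ‖w‖⁻¹) (Metric.ball 0 T) := by
    refine integrableOn_ball_of_norm_le_rpow (by simp) (C := 1) (α := 1) (by simp) ?_
      (by fun_prop)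
    refine Filter.Eventually.of_forall fun w => ?_
    simp [Real.rpow_neg_one]
  refine (h1.add (integrableOn_const (C := |T|) measure_ball_lt_top.ne)).mono'
    (Real.measurable_log.comp measurable_norm).aestronglyMeasurable ?_
  filter_upwards [ae_restrict_mem measurableSet_ball] with w hw
  simp only [Metric.mem_ball, dist_zero_right] at hw
  have hT : ‖w‖ ≤ |T| := hw.le.trans (le_abs_self T)
  rw [Real.norm_eq_abs, Pi.add_apply]
  rcases eq_or_ne w 0 with rfl | h0
  · simp
  have hp := norm_pos_iff.2 h0
  have hi := inv_pos.2 hp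
  rw [abs_le]
  have := Real.log_le_self hp.le
  have h2 := Real.log_le_self hi.le
  rw [Real.log_inv] at h2
  constructor <;> linarith

lemma LI_kap (h : ℝ) : LI (kap h) := by
  refine ⟨by unfold kap; fun_prop, fun T => ?_⟩
  exact ((integrableOn_const (C := Real.log h) measure_ball_lt_top.ne).sub (LI_log.int T)).pos_part

lemma avg_log {h : ℝ} (hh : 0 < h) {w : ℂ} (hw : w ≠ 0) :
    Real.circleAverage (fun w => Real.log ‖w‖) w h = kap h w + Real.log ‖w‖ := by
  have := circleAverage_log_norm_sub_const_eq_log_radius_add_posLog (R := h) (a := 0) (c := w)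
    hh.ne'
  simp only [sub_zero] at this
  rw [this]
  have hp := norm_pos_iff.2 hw
  rw [Real.posLog_apply, Real.log_mul (by positivity) (by positivity), Real.log_inv, kap]
  rw [← max_add_add_left, ← max_add_add_right, max_comm]
  ring_nf
  exact max_comm _ _

lemma cv_kap {v : ℂ → ℝ} (hv : BS v) {h : ℝ} (hh : 0 < h) (z : ℂ) :
    cv (kap h) v z = Real.circleAverage (cv (fun w => Real.log ‖w‖) v) z h
      - cv (fun w => Real.log ‖w‖) v z := by
  rw [avg_cv' LI_log hv, eq_sub_iff_add_eq]
  unfold cv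
  rw [← integral_add (cv_int (LI_kap h) hv z) (cv_int LI_log hv z)]
  refine integral_congr_ae ?_
  have : ∀ᵐ w : ℂ, w ≠ 0 := by simp [ae_iff, measure_singleton]
  filter_upwards [this] with w hw
  rw [avg_log hh hw]
  ring

lemma cv_sub {k v w : ℂ → ℝ} (hk : LI k) (hv : BS v) (hw : BS w) (z : ℂ) :
    cv k (fun z => v z - w z) z = cv k v z - cv k w z := by
  unfold cv
  rw [← integral_sub (cv_int hk hv z) (cv_int hk hw z)]
  simp only [mul_sub]

lemma star {v : ℂ → ℝ} (hv : BS v) {h R : ℝ} (hh : 0 < h) (hR : 0 < R) (z : ℂ) :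
    cv (kap R) (fun z => Real.circleAverage v z h - v z) z =
      Real.circleAverage (cv (kap h) v) z R - cv (kap h) v z := by
  have hN := Nice.cv LI_log hv
  rw [cv_sub (LI_kap R) (hv.avg h) hv, ← avg_cv (LI_kap R) hv]
  have e1 : ∀ {t : ℝ}, 0 < t → cv (kap t) v = fun z =>
      Real.circleAverage (cv (fun w => Real.log ‖w‖) v) z t
      - cv (fun w => Real.log ‖w‖) v z := fun ht => funext fun z => cv_kap hv ht z
  rw [e1 hh, e1 hR]
  have e2 := Real.circleAverage_fun_sub ((hN.avg R).circ z h) (hN.circ z h)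
  have e3 := Real.circleAverage_fun_sub ((hN.avg h).circ z R) (hN.circ z R)
  rw [e2, e3, avg_comm hN]
  ring

/-- radial integration -/
lemma rot {k : ℝ → ℝ} {f : ℂ → ℝ} (hk : Integrable fun w : ℂ => k ‖w‖) (hkm : Measurable k)
    {T : ℝ} (hT : ∀ r, T < r → k r = 0) (hf : Nice f) (z : ℂ) :
    ∫ w, k ‖w‖ * f (z + w) = ∫ w : ℂ, k ‖w‖ * Real.circleAverage f z ‖w‖ := by
  obtain ⟨C, hC⟩ := hf.bdd (‖z‖ + T)
  have h1 : ∀ θ : ℝ, ∫ w, k ‖w‖ * f (z + w) =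
      ∫ w, k ‖w‖ * f (z + Complex.exp (θ * Complex.I) * w) := fun θ => by
    have := (rotation (Circle.exp θ)).measurePreserving.integral_comp'
      (f := (rotation (Circle.exp θ)).toMeasurableEquiv) (fun w => k ‖w‖ * f (z + w))
    rw [← this]
    refine integral_congr_ae (Filter.Eventually.of_forall fun w => ?_)
    simp [rotation_apply]
  have h2 : ∫ w, k ‖w‖ * f (z + w) = (2 * Real.pi)⁻¹ * ∫ θ in (0:ℝ)..(2 * Real.pi),
      ∫ w, k ‖w‖ * f (z + Complex.exp (θ * Complex.I) * w) := by
    simp only [← h1]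
    rw [intervalIntegral.integral_const, smul_eq_mul, sub_zero, inv_mul_cancel_left₀]
    exact Real.two_pi_pos.ne'
  rw [h2, intervalIntegral_integral_swap]
  · rw [← integral_const_mul]
    refine integral_congr_ae (Filter.Eventually.of_forall fun w => ?_)
    simp only [intervalIntegral.integral_const_mul]
    rw [Real.circleAverage_eq_integral_add w.arg, smul_eq_mul]
    have : ∀ θ : ℝ, circleMap z ‖w‖ (θ + w.arg) = z + Complex.exp (θ * Complex.I) * w := fun θ => by
      unfold circleMap
      conv_rhs => rw [← Complex.norm_mul_exp_arg_mul_I w]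
      push_cast
      rw [add_mul, Complex.exp_add]
      ring
    simp only [this]
    ring
  · have := (hk.abs.mul_const C).comp_snd (volume.restrict (Set.uIoc 0 (2 * Real.pi)))
    refine Integrable.mono' this ?_ ?_
    · refine Measurable.aestronglyMeasurable ?_
      refine (hkm.comp measurable_snd.norm).mul (hf.meas.comp ?_)
      refine Continuous.measurable ?_
      fun_prop
    · refine Filter.Eventually.of_forall fun p => ?_
      simp only [Function.uncurry, Real.norm_eq_abs, abs_mul]
      by_cases hp : T < ‖p.2‖
      · rw [hT _ hp]; simp
      · refine mul_le_mul_of_nonneg_left (hC _ ?_) (abs_nonneg _)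
        refine (norm_add_le _ _).trans ?_
        rw [norm_mul, Complex.norm_exp_ofReal_mul_I, one_mul]
        linarith

end SO

namespace SO

lemma kap_nonneg (h : ℝ) (w : ℂ) : 0 ≤ kap h w := le_max_right _ _

lemma kap_zero {h : ℝ} (hh : 0 < h) {w : ℂ} (hw : h ≤ ‖w‖) : kap h w = 0 := by
  unfold kap
  exact max_eq_right (by linarith [Real.log_le_log hh hw])

lemma kap_of_le {h : ℝ} {w : ℂ} (h0 : w ≠ 0) (hw : ‖w‖ ≤ h) :
    kap h w = Real.log h - Real.log ‖w‖ := by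
  unfold kap
  exact max_eq_left (by linarith [Real.log_le_log (norm_pos_iff.2 h0) hw])

lemma kap_mono {h R : ℝ} (hh : 0 < h) (hR : h ≤ R) (w : ℂ) : kap h w ≤ kap R w := by
  unfold kap
  exact max_le_max (by linarith [Real.log_le_log hh hR]) le_rfl

lemma kap_neg (h : ℝ) (w : ℂ) : kap h (-w) = kap h w := by simp [kap]

lemma kap_int {h : ℝ} (hh : 0 < h) : Integrable (kap h) := by
  have := (LI_kap h).int h
  rw [← integrable_indicator_iff measurableSet_ball] at this
  refine this.congr (Filter.Eventually.of_forall fun w => ?_)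
  by_cases hw : w ∈ Metric.ball (0 : ℂ) h
  · rw [indicator_of_mem hw]
  · rw [indicator_of_notMem hw, kap_zero hh]
    simpa using hw

lemma ae_ne_zero : ∀ᵐ w : ℂ, w ≠ 0 := by simp [ae_iff, measure_singleton]

noncomputable def cc (h : ℝ) : ℝ := ∫ w, kap h w

lemma cc_pos {h : ℝ} (hh : 0 < h) : 0 < cc h := by
  unfold cc
  rw [integral_pos_iff_support_of_nonneg (kap_nonneg h) (kap_int hh)]
  refine lt_of_lt_of_le ?_ (measure_mono (s := Metric.ball 0 h \ {0}) ?_)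
  · rw [measure_sdiff_null (by simp)]
    exact Metric.measure_ball_pos _ _ hh
  · intro w hw
    have h0 : w ≠ 0 := hw.2
    have h1 : ‖w‖ < h := by simpa using hw.1
    rw [Function.mem_support, kap_of_le h0 h1.le]
    have := Real.log_lt_log (norm_pos_iff.2 h0) h1
    linarith

noncomputable def UU (h : ℝ) (v : ℂ → ℝ) (z : ℂ) : ℝ := (cc h)⁻¹ * cv (kap h) v z

noncomputable def gg (h : ℝ) (v : ℂ → ℝ) (z : ℂ) : ℝ :=
  (cc h)⁻¹ * (Real.circleAverage v z h - v z)

lemma BS.const_mul {v : ℂ → ℝ} (hv : BS v) (c : ℝ) : BS fun z => c * v z := by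
  obtain ⟨B, hB⟩ := hv.bdd
  obtain ⟨T, hT⟩ := hv.supp
  refine ⟨hv.meas.const_mul c, ⟨|c| * B, fun z => ?_⟩, T, fun z hz => by rw [hT z hz, mul_zero]⟩
  rw [abs_mul]
  exact mul_le_mul_of_nonneg_left (hB z) (abs_nonneg c)

lemma Nice.const_mul {v : ℂ → ℝ} (hv : Nice v) (c : ℝ) : Nice fun z => c * v z := by
  refine ⟨hv.meas.const_mul c, fun T => ?_⟩
  obtain ⟨B, hB⟩ := hv.bdd T
  refine ⟨|c| * B, fun z hz => ?_⟩
  rw [abs_mul]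
  exact mul_le_mul_of_nonneg_left (hB z hz) (abs_nonneg c)

lemma BS.gg {v : ℂ → ℝ} (hv : BS v) (h : ℝ) : BS (gg h v) :=
  ((hv.avg h).sub hv).const_mul _

lemma BS.UU {v : ℂ → ℝ} (hv : BS v) (h : ℝ) : Nice (UU h v) :=
  (Nice.cv (LI_kap h) hv).const_mul _

lemma BS.integrable {v : ℂ → ℝ} (hv : BS v) : Integrable v := by
  obtain ⟨B, hB⟩ := hv.bdd
  obtain ⟨T, hT⟩ := hv.supp
  have : IntegrableOn v (Metric.closedBall 0 T) :=
    Integrable.mono' (g := fun _ => B) (integrableOn_const measure_closedBall_lt_top.ne)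
      hv.meas.aestronglyMeasurable (Filter.Eventually.of_forall fun z => hB z)
  rw [← integrable_indicator_iff measurableSet_closedBall] at this
  refine this.congr (Filter.Eventually.of_forall fun w => ?_)
  by_cases hw : w ∈ Metric.closedBall (0 : ℂ) T
  · rw [indicator_of_mem hw]
  · rw [indicator_of_notMem hw, hT]
    simpa using hw

lemma star' {v : ℂ → ℝ} (hv : BS v) {h R : ℝ} (hh : 0 < h) (hR : 0 < R) (z : ℂ) :
    ∫ w, kap R (z - w) * gg h v w = Real.circleAverage (UU h v) z R - UU h v z := by
  rw [← cv_swap]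
  have e1 : cv (kap R) (gg h v) z =
      (cc h)⁻¹ * cv (kap R) (fun z => Real.circleAverage v z h - v z) z := by
    unfold cv gg
    rw [← integral_const_mul]
    congr 1
    ext w
    ring
  have e2 : Real.circleAverage (UU h v) z R =
      (cc h)⁻¹ * Real.circleAverage (cv (kap h) v) z R := by
    have := Real.circleAverage_fun_smul (a := (cc h)⁻¹) (f := cv (kap h) v) (c := z) (R := R)
    exact this
  rw [e1, e2, star hv hh hR]
  unfold UU
  ring

lemma star_int {v : ℂ → ℝ} (hv : BS v) (h R : ℝ) (z : ℂ) :
    Integrable fun w => kap R (z - w) * gg h v w := by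
  have := (cv_int (LI_kap R) (hv.gg h) z).comp_sub_left z
  simpa using this

structure SH (ρ : ℝ) (v : ℂ → ℝ) : Prop where
  bs : BS v
  npos : ∀ z, v z ≤ 0
  sub : ∀ z r, 0 < r → ‖z‖ + r < ρ → v z ≤ Real.circleAverage v z r

lemma gg_nonneg {ρ h : ℝ} {v : ℂ → ℝ} (hv : SH ρ v) (hh : 0 < h) {z : ℂ} (hz : ‖z‖ + h < ρ) :
    0 ≤ gg h v z := by
  have := hv.sub z h hh hz
  exact mul_nonneg (inv_nonneg.2 (cc_pos hh).le) (by linarith)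

lemma UU_nonpos {ρ h : ℝ} {v : ℂ → ℝ} (hv : SH ρ v) (hh : 0 < h) (z : ℂ) :
    UU h v z ≤ 0 := by
  refine mul_nonpos_of_nonneg_of_nonpos (inv_nonneg.2 (cc_pos hh).le) ?_
  refine integral_nonpos fun w => ?_
  exact mul_nonpos_of_nonneg_of_nonpos (kap_nonneg _ _) (hv.npos _)

lemma UU_le {h : ℝ} {v : ℂ → ℝ} (hv : BS v) (hh : 0 < h) {z : ℂ} {t : ℝ}
    (ht : ∀ w, ‖w‖ < h → v (z - w) ≤ t) : UU h v z ≤ t := by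
  unfold UU
  rw [inv_mul_le_iff₀ (cc_pos hh)]
  unfold cc cv
  rw [← integral_mul_const]
  refine integral_mono (cv_int (LI_kap h) hv z) ((kap_int hh).mul_const t) fun w => ?_
  simp only
  by_cases hw : ‖w‖ < h
  · exact mul_le_mul_of_nonneg_left (ht w hw) (kap_nonneg _ _)
  · rw [kap_zero hh (not_lt.1 hw)]; simp

lemma radial_meas {f : ℂ → ℝ} (hf : Measurable f) (z : ℂ) :
    Measurable fun w : ℂ => Real.circleAverage f z ‖w‖ := by
  unfold Real.circleAverage
  simp only [intervalIntegral.integral_of_le Real.two_pi_pos.le, smul_eq_mul]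
  refine Measurable.const_mul ?_ _
  refine StronglyMeasurable.measurable (StronglyMeasurable.integral_prod_right ?_)
  refine Measurable.stronglyMeasurable ?_
  refine hf.comp ?_
  refine Continuous.measurable ?_
  unfold circleMap
  fun_prop

lemma radial_int {k : ℝ → ℝ} {f : ℂ → ℝ} (hk : Integrable fun w : ℂ => k ‖w‖)
    {T : ℝ} (hT : ∀ r, T < r → k r = 0) (hf : Nice f) (z : ℂ) :
    Integrable fun w : ℂ => k ‖w‖ * Real.circleAverage f z ‖w‖ := by
  obtain ⟨C, hC⟩ := hf.bdd (‖z‖ + T)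
  refine Integrable.mono' (hk.abs.mul_const C) ?_ ?_
  · exact hk.aestronglyMeasurable.mul (radial_meas hf.meas z).aestronglyMeasurable
  · refine Filter.Eventually.of_forall fun w => ?_
    rw [Real.norm_eq_abs, abs_mul]
    by_cases hw : T < ‖w‖
    · rw [hT _ hw]; simp
    · refine mul_le_mul_of_nonneg_left (abs_circ_le fun θ => hC _ ?_) (abs_nonneg _)
      have := norm_circleMap_le z ‖w‖ θ
      rw [abs_norm] at this
      linarith

lemma le_UU {ρ h : ℝ} {v : ℂ → ℝ} (hv : SH ρ v) (hh : 0 < h) {z : ℂ} (hz : ‖z‖ + h < ρ) :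
    v z ≤ UU h v z := by
  have h1 : cv (kap h) v z = ∫ w : ℂ, kap h w * Real.circleAverage v z ‖w‖ := by
    have := rot (k := fun r => max (Real.log h - Real.log r) 0) (f := v) (kap_int hh)
      (by fun_prop) (T := h) (fun r hr => max_eq_right (by linarith [Real.log_le_log hh hr.le]))
      hv.bs.nice z
    unfold kap
    rw [← this]
    unfold cv
    rw [← integral_neg_eq_self]
    simp
  unfold UU
  rw [le_inv_mul_iff₀ (cc_pos hh), h1]
  unfold cc
  rw [← integral_mul_const]
  have hi : Integrable fun w : ℂ => kap h w * Real.circleAverage v z ‖w‖ :=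
    radial_int (k := fun r => max (Real.log h - Real.log r) 0) (kap_int hh) (T := h)
      (fun r hr => max_eq_right (by linarith [Real.log_le_log hh hr.le])) hv.bs.nice z
  refine integral_mono ((kap_int hh).mul_const _) hi fun w => ?_
  simp only
  by_cases hw : ‖w‖ < h
  · refine mul_le_mul_of_nonneg_left ?_ (kap_nonneg _ _)
    rcases (norm_nonneg w).eq_or_lt with h0 | h0
    · rw [← h0]; simp
    · exact hv.sub z _ h0 (by linarith)
  · rw [kap_zero hh (not_lt.1 hw)]; simp

lemma avg_UU_le {ρ h s r : ℝ} {v : ℂ → ℝ} (hv : SH ρ v) (hh : 0 < h) (hρ : h ≤ ρ / 4)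
    (hs : 0 < s) (hsr : s ≤ r) (hr : r < ρ / 2) :
    Real.circleAverage (UU h v) 0 r ≤
      - ((Real.log (ρ / 2) - Real.log r) * ∫ w in Metric.ball 0 s, gg h v w) := by
  have hr0 : 0 < r := hs.trans_le hsr
  have e1 := star' hv.bs hh (R := ρ / 2) (by linarith) 0
  have e2 := star' hv.bs hh hr0 0
  have h3 : Real.circleAverage (UU h v) 0 (ρ / 2) ≤ 0 := by
    have := Real.circleAverage_mono_on_of_le_circle (a := 0) ((hv.bs.UU h).circ 0 (ρ / 2))
      (fun x _ => UU_nonpos hv hh x)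
    exact this
  have h4 : (Real.log (ρ / 2) - Real.log r) * ∫ w in Metric.ball 0 s, gg h v w ≤
      ∫ w, (kap (ρ / 2) (0 - w) * gg h v w - kap r (0 - w) * gg h v w) := by
    rw [← integral_const_mul, ← integral_indicator measurableSet_ball]
    refine integral_mono_ae ?_ ((star_int hv.bs h _ 0).sub (star_int hv.bs h _ 0)) ?_
    · exact (((hv.bs.gg h).integrable).const_mul _).indicator measurableSet_ball
    filter_upwards [ae_ne_zero] with w hw0
    simp only [zero_sub, kap_neg]
    have hl := Real.log_lt_log hr0 hr
    by_cases hw : ‖w‖ < s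
    · rw [indicator_of_mem (by simpa using hw), kap_of_le hw0 (by linarith),
        kap_of_le hw0 (by linarith)]
      apply le_of_eq; ring
    · rw [indicator_of_notMem (by simpa using hw)]
      by_cases hw2 : ‖w‖ < ρ / 2
      · rw [← sub_mul]
        exact mul_nonneg (sub_nonneg.2 (kap_mono hr0 hr.le w))
          (gg_nonneg hv hh (by linarith))
      · rw [kap_zero (by linarith) (not_lt.1 hw2), kap_zero hr0 (by linarith)]
        simp
  rw [integral_sub (star_int hv.bs h _ 0) (star_int hv.bs h _ 0), e1, e2] at h4
  linarith

lemma lower {ρ h R : ℝ} {v : ℂ → ℝ} (hv : SH ρ v) (hh : 0 < h) (hρ : h ≤ ρ / 4)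
    (hR : 0 < R) {z : ℂ} (hz : ‖z‖ + R ≤ ρ / 2) {K : ℝ} (hK : -K ≤ ∫ w, v w) :
    -K / (volume.real (Metric.ball (0:ℂ) R)) - ∫ w, kap R (z - w) * gg h v w ≤ UU h v z := by
  set P := ∫ w, kap R (z - w) * gg h v w with hP
  set a := volume.real (Metric.ball (0:ℂ) R) with ha
  have hapos : 0 < a := by
    rw [ha, measureReal_def]
    exact ENNReal.toReal_pos (Metric.measure_ball_pos _ _ hR).ne' measure_ball_lt_top.ne
  have h1 : ∀ r, 0 < r → r ≤ R → Real.circleAverage (UU h v) z r ≤ UU h v z + P := by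
    intro r hr hrR
    have e := star' hv.bs hh hr z
    have : ∫ w, kap r (z - w) * gg h v w ≤ P := by
      refine integral_mono (star_int hv.bs h _ z) (star_int hv.bs h _ z) fun w => ?_
      simp only
      by_cases hw : ‖z - w‖ < R
      · refine mul_le_mul_of_nonneg_right (kap_mono hr hrR _) (gg_nonneg hv hh ?_)
        have := norm_sub_norm_le w z
        rw [norm_sub_rev] at this
        linarith
      · rw [kap_zero hR (not_lt.1 hw), kap_zero hr (by linarith)]
    linarith
  have hkk : (fun w : ℂ => (Set.Iio R).indicator (fun _ => (1:ℝ)) ‖w‖) =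
      (Metric.ball 0 R).indicator (fun _ => (1:ℝ)) := by
    ext w; simp [Set.indicator]
  have hki : Integrable (fun w : ℂ => (Set.Iio R).indicator (fun _ => (1:ℝ)) ‖w‖) := by
    rw [hkk]
    exact (integrable_indicator_iff measurableSet_ball).2
      (integrableOn_const measure_ball_lt_top.ne)
  have h2 := rot (k := (Set.Iio R).indicator (fun _ => (1:ℝ))) hki
    (measurable_const.indicator measurableSet_Iio) (T := R)
    (fun r hr => by simp [hr.le]) (hv.bs.UU h) z
  have h3 : ∫ w : ℂ, (Set.Iio R).indicator (fun _ => (1:ℝ)) ‖w‖ *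
      Real.circleAverage (UU h v) z ‖w‖ ≤ a * (UU h v z + P) := by
    have e : a * (UU h v z + P) =
      ∫ w : ℂ, (Set.Iio R).indicator (fun _ => (1:ℝ)) ‖w‖ * (UU h v z + P) := by
      rw [integral_mul_const, hkk, integral_indicator measurableSet_ball]
      simp [ha]
    rw [e]
    refine integral_mono_ae (radial_int hki (fun r hr => by simp [hr.le]) (T := R) (hv.bs.UU h) z)
      (hki.mul_const _) ?_
    filter_upwards [ae_ne_zero] with w hw0
    by_cases hw : ‖w‖ < R
    · refine mul_le_mul_of_nonneg_left (h1 _ (norm_pos_iff.2 hw0) hw.le) ?_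
      simp [hw]
    · simp [hw]
  have h4 : ∫ w, v w ≤ ∫ w : ℂ, (Set.Iio R).indicator (fun _ => (1:ℝ)) ‖w‖ * UU h v (z + w) := by
    rw [← integral_add_left_eq_self v z]
    have hi : Integrable fun w : ℂ =>
        (Set.Iio R).indicator (fun _ => (1:ℝ)) ‖w‖ * UU h v (z + w) := by
      obtain ⟨C, hC⟩ := (hv.bs.UU h).bdd (‖z‖ + R)
      refine Integrable.mono' (hki.mul_const C) ?_ ?_
      · exact hki.aestronglyMeasurable.mul
          ((hv.bs.UU h).meas.comp (measurable_const.add measurable_id)).aestronglyMeasurable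
      · refine Filter.Eventually.of_forall fun w => ?_
        by_cases hw : ‖w‖ < R
        · simp only [Set.mem_Iio, hw, Set.indicator_of_mem, one_mul]
          exact hC _ ((norm_add_le _ _).trans (by linarith))
        · simp [hw]
    refine integral_mono (hv.bs.integrable.comp_add_left z) hi fun w => ?_
    simp only
    by_cases hw : ‖w‖ < R
    · simp only [Set.mem_Iio, hw, Set.indicator_of_mem, one_mul]
      exact le_UU hv hh (by linarith [norm_add_le z w])
    · simpa [hw] using hv.npos _
  rw [h2] at h4
  have h5 : -K / a ≤ UU h v z + P := by
    rw [div_le_iff₀ hapos]; linarith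
  linarith

end SO

namespace SO

lemma Nice.exp_neg {U : ℂ → ℝ} (hU : Nice U) : Nice fun z => Real.exp (-U z) := by
  refine ⟨Real.measurable_exp.comp hU.meas.neg, fun T => ?_⟩
  obtain ⟨C, hC⟩ := hU.bdd T
  refine ⟨Real.exp C, fun z hz => ?_⟩
  rw [abs_of_pos (Real.exp_pos _), Real.exp_le_exp]
  linarith [(abs_le.1 (hC z hz)).1]

lemma jensen_circ {U : ℂ → ℝ} (hU : Nice U) (z : ℂ) (r : ℝ) :
    Real.exp (-Real.circleAverage U z r) ≤
      Real.circleAverage (fun z => Real.exp (-U z)) z r := by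
  rw [Real.circleAverage_eq_intervalAverage, Real.circleAverage_eq_intervalAverage]
  have hc : ConvexOn ℝ Set.univ fun x : ℝ => Real.exp (-x) := by
    have := convexOn_exp.comp_linearMap (-(LinearMap.id : ℝ →ₗ[ℝ] ℝ))
    simpa [Function.comp_def] using this
  have : NeZero (volume.restrict (Set.uIoc 0 (2 * Real.pi))) := by
    constructor
    rw [Ne, Measure.restrict_eq_zero, Set.uIoc_of_le Real.two_pi_pos.le]
    simp [Real.pi_pos]
  have h1 := (hU.circ z r).def'
  have h2 := (hU.exp_neg.circ z r).def'
  exact hc.map_average_le (f := fun θ => U (circleMap z r θ))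
    (μ := volume.restrict (Set.uIoc 0 (2 * Real.pi)))
    (by fun_prop) isClosed_univ (by simp) h1 h2

/-- half-open annulus -/
def ann (s r : ℝ) : Set ℂ := {z | s ≤ ‖z‖ ∧ ‖z‖ < r}

lemma meas_ann (s r : ℝ) : MeasurableSet (ann s r) :=
  (measurableSet_le measurable_const measurable_norm).inter
    (measurableSet_lt measurable_norm measurable_const)

lemma ann_sub (s r : ℝ) : ann s r ⊆ Metric.ball 0 r := fun z hz => by simpa using hz.2

lemma ann_int {s r : ℝ} (hs : 0 < s) : IntegrableOn (fun z : ℂ => (‖z‖ ^ 2)⁻¹) (ann s r) := by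
  refine Integrable.mono' (g := fun _ => (s ^ 2)⁻¹) ?_ (by measurability) ?_
  · exact integrableOn_const (ne_top_of_le_ne_top measure_ball_lt_top.ne
      (measure_mono (ann_sub s r)))
  · filter_upwards [ae_restrict_mem (meas_ann s r)] with z hz
    have := hz.1
    rw [Real.norm_of_nonneg (by positivity)]
    gcongr

lemma diverge {r : ℝ} (hr : 0 < r) (C : ℝ) :
    ∃ s, 0 < s ∧ s < r ∧ C < ∫ z in ann s r, (‖z‖ ^ 2)⁻¹ := by
  have h1 : ¬ IntegrableOn (fun z : ℂ => (‖z‖ ^ 2)⁻¹) (Metric.ball 0 r) := by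
    rw [integrableOn_fun_norm_addHaar volume (f := fun y : ℝ => (y ^ 2)⁻¹)]
    intro h
    have h2 : IntegrableOn (fun y : ℝ => y ^ (-1 : ℝ)) (Ioo 0 r) := by
      refine h.congr_fun (fun y hy => ?_) measurableSet_Ioo
      have := hy.1
      simp [Real.rpow_neg_one]
      field_simp
    rw [intervalIntegral.integrableOn_Ioo_rpow_iff hr] at h2
    linarith
  have h2 : ∫⁻ z in Metric.ball (0:ℂ) r, ENNReal.ofReal ((‖z‖ ^ 2)⁻¹) = ⊤ := by
    by_contra hne
    apply h1
    refine ⟨by measurability, ?_⟩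
    rw [hasFiniteIntegral_iff_ofReal (Filter.Eventually.of_forall fun z => by positivity)]
    exact lt_top_iff_ne_top.2 hne
  have h3 : Metric.ball (0:ℂ) r =ᵐ[volume] ⋃ n : ℕ, ann (r / (n + 2)) r := by
    filter_upwards [ae_ne_zero] with z hz
    refine propext ⟨fun h => ?_, fun h => ?_⟩
    · have hz' := norm_pos_iff.2 hz
      obtain ⟨n, hn⟩ := exists_nat_gt (r / ‖z‖)
      refine Set.mem_iUnion.2 ⟨n, ?_, by
        have h' : z ∈ Metric.ball (0:ℂ) r := h
        simpa using h'⟩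
      rw [div_lt_iff₀ hz'] at hn
      rw [div_le_iff₀ (by positivity)]
      nlinarith
    · obtain ⟨n, hn⟩ := Set.mem_iUnion.1 h
      exact ann_sub _ _ hn
  have hmono : Monotone fun n : ℕ => ann (r / ((n:ℝ) + 2)) r := by
    intro a b hab z hz
    refine ⟨le_trans ?_ hz.1, hz.2⟩
    gcongr
  rw [setLIntegral_congr h3, setLIntegral_iUnion_of_directed _ hmono.directed_le] at h2
  have h4 : ENNReal.ofReal C < ⨆ n : ℕ, ∫⁻ z in ann (r / (n + 2)) r,
    ENNReal.ofReal ((‖z‖ ^ 2)⁻¹) := by rw [h2]; exact ENNReal.ofReal_lt_top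
  obtain ⟨n, hn⟩ := lt_iSup_iff.1 h4
  have hs : 0 < r / ((n:ℝ) + 2) := by positivity
  refine ⟨r / (n + 2), hs, ?_, ?_⟩
  · rw [div_lt_iff₀ (by positivity)]
    nlinarith [(Nat.cast_nonneg n : (0:ℝ) ≤ n)]
  · rw [← ofReal_integral_eq_lintegral_ofReal (ann_int hs)
      (Filter.Eventually.of_forall fun z => by positivity)] at hn
    exact (ENNReal.ofReal_lt_ofReal_iff'.1 hn).1

lemma mass_bound {ρ : ℝ} (hρ : 0 < ρ) (k : ℕ) (I : ℝ) :
    ∃ s, 0 < s ∧ s < ρ / 2 ∧ ∃ β : ℝ, β < 2 * k + 2 ∧ ∀ (v : ℂ → ℝ) (h : ℝ), SH ρ v → 0 < h →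
      h ≤ ρ / 4 → (∫ z in Metric.ball 0 (ρ / 2), ‖z‖ ^ (2 * k) * Real.exp (-v z)) ≤ I →
      ∫ w in Metric.ball 0 s, gg h v w ≤ β := by
  set r0 := ρ / 2 with hr0
  have hr0' : 0 < r0 := by positivity
  obtain ⟨s, hs, hsr, hdiv⟩ := diverge hr0' (2 * I / r0 ^ (2 * k + 2))
  have hlog : 0 < Real.log r0 - Real.log s := by linarith [Real.log_lt_log hs hsr]
  set δ := Real.log 2 / (Real.log r0 - Real.log s) with hδ
  have hδ0 : 0 < δ := div_pos (Real.log_pos (by norm_num)) hlog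
  refine ⟨s, hs, hsr, 2 * k + 2 - δ, by linarith, fun v h hv hh hhρ hI => ?_⟩
  by_contra! hcon
  set m := ∫ w in Metric.ball 0 s, gg h v w with hm
  have hU := hv.bs.UU h
  -- the radial weight
  set kk : ℝ → ℝ := (Set.Ico s r0).indicator fun r => r ^ (2 * k) with hkk
  have hkkn : ∀ r, 0 ≤ kk r := fun r => by
    refine Set.indicator_nonneg (fun x hx => ?_) r
    have := hs.trans_le hx.1
    positivity
  have hkkm : Measurable kk := (measurable_id.pow_const _).indicator measurableSet_Ico
  have hkkT : ∀ r, r0 < r → kk r = 0 := fun r hr => by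
    rw [hkk, Set.indicator_of_notMem]; simp [hr.le]
  have hkki : Integrable fun w : ℂ => kk ‖w‖ := by
    have : IntegrableOn (fun w : ℂ => kk ‖w‖) (Metric.closedBall 0 r0) := by
      refine Integrable.mono' (g := fun _ => r0 ^ (2 * k))
        (integrableOn_const measure_closedBall_lt_top.ne)
        (hkkm.comp measurable_norm).aestronglyMeasurable
        (Filter.Eventually.of_forall fun w => ?_)
      rw [Real.norm_of_nonneg (hkkn _)]
      by_cases hw : ‖w‖ ∈ Set.Ico s r0
      · rw [hkk, Set.indicator_of_mem hw]
        have := hw.2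
        gcongr
      · rw [hkk, Set.indicator_of_notMem hw]
        positivity
    rw [← integrable_indicator_iff measurableSet_closedBall] at this
    refine this.congr (Filter.Eventually.of_forall fun w => ?_)
    by_cases hw : w ∈ Metric.closedBall (0 : ℂ) r0
    · rw [indicator_of_mem hw]
    · rw [indicator_of_notMem hw]
      refine (hkkT _ ?_).symm
      simpa using hw
  have e1 := rot hkki hkkm hkkT hU.exp_neg 0
  simp only [zero_add] at e1
  have hi1 := radial_int hkki hkkT hU.exp_neg 0
  -- upper bound
  have hvi : IntegrableOn (fun z : ℂ => ‖z‖ ^ (2 * k) * Real.exp (-v z)) (Metric.ball 0 r0) := by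
    obtain ⟨B, hB⟩ := hv.bs.bdd
    refine Integrable.mono' (g := fun _ => r0 ^ (2 * k) * Real.exp B)
      (integrableOn_const measure_ball_lt_top.ne) ?_ ?_
    · exact ((measurable_norm.pow_const _).mul
        (Real.measurable_exp.comp hv.bs.meas.neg)).aestronglyMeasurable
    · filter_upwards [ae_restrict_mem measurableSet_ball] with z hz
      have hz' : ‖z‖ < r0 := by simpa using hz
      rw [Real.norm_of_nonneg (by positivity)]
      have : -v z ≤ B := by linarith [(abs_le.1 (hB z)).1]
      gcongr
  have up : ∫ w : ℂ, kk ‖w‖ * Real.exp (-UU h v w) ≤ I := by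
    refine le_trans ?_ hI
    rw [← integral_indicator measurableSet_ball]
    refine integral_mono_of_nonneg (Filter.Eventually.of_forall fun w =>
      mul_nonneg (hkkn _) (Real.exp_pos _).le)
      ((integrable_indicator_iff measurableSet_ball).2 hvi)
      (Filter.Eventually.of_forall fun w => ?_)
    simp only
    by_cases hw : ‖w‖ ∈ Set.Ico s r0
    · rw [hkk, Set.indicator_of_mem hw, indicator_of_mem (by simpa using hw.2)]
      have := le_UU hv hh (z := w) (by linarith [hw.2])
      gcongr
    · rw [hkk, Set.indicator_of_notMem hw, zero_mul]
      exact Set.indicator_nonneg (fun x _ => by positivity) w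
  -- lower bound
  have low : ∫ z in ann s r0, (r0 ^ (2 * k + 2) / 2) * (‖z‖ ^ 2)⁻¹ ≤
      ∫ w : ℂ, kk ‖w‖ * Real.circleAverage (fun z => Real.exp (-UU h v z)) 0 ‖w‖ := by
    rw [← integral_indicator (meas_ann s r0)]
    refine integral_mono ?_ hi1 fun w => ?_
    · exact (integrable_indicator_iff (meas_ann s r0)).2 ((ann_int hs).const_mul _)
    simp only
    by_cases hw : w ∈ ann s r0
    · rw [indicator_of_mem hw, hkk, Set.indicator_of_mem (show ‖w‖ ∈ Set.Ico s r0 from hw)]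
      have hw0 : 0 < ‖w‖ := hs.trans_le hw.1
      have j1 := jensen_circ hU 0 ‖w‖
      have j2 := avg_UU_le hv hh hhρ hs hw.1 hw.2
      rw [← hm, ← hr0] at j2
      refine le_trans ?_ (mul_le_mul_of_nonneg_left
        ((Real.exp_le_exp.2 (neg_le_neg j2)).trans j1) (by positivity))
      rw [neg_neg]
      set t := Real.log r0 - Real.log ‖w‖ with ht
      have ht0 : 0 ≤ t := by linarith [Real.log_le_log hw0 hw.2.le]
      have ht1 : t ≤ Real.log r0 - Real.log s := by linarith [Real.log_le_log hs hw.1]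
      have h5 : (2 * k + 2 : ℝ) * t - Real.log 2 ≤ t * m := by
        have : δ * t ≤ Real.log 2 := by
          rw [hδ, div_mul_eq_mul_div, div_le_iff₀ hlog]
          exact mul_le_mul_of_nonneg_left ht1 (Real.log_nonneg (by norm_num))
        nlinarith
      have h6 : Real.exp ((2 * k + 2 : ℝ) * t - Real.log 2) = (r0 / ‖w‖) ^ (2 * k + 2) / 2 := by
        rw [Real.exp_sub, Real.exp_log (by norm_num)]
        have : (2 * k + 2 : ℝ) = ((2 * k + 2 : ℕ) : ℝ) := by push_cast; ring
        rw [this, Real.exp_nat_mul, ht, Real.exp_sub, Real.exp_log hr0', Real.exp_log hw0]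
      have h7 := Real.exp_le_exp.2 h5
      rw [h6] at h7
      refine le_trans (le_of_eq ?_) (mul_le_mul_of_nonneg_left h7 (by positivity))
      clear_value r0
      rw [div_pow, pow_add ‖w‖]
      field_simp
    · rw [indicator_of_notMem hw]
      refine mul_nonneg (hkkn _) ((Real.exp_pos _).le.trans (jensen_circ hU 0 ‖w‖))
  rw [integral_const_mul] at low
  rw [div_lt_iff₀ (by positivity)] at hdiv
  linarith

end SO

namespace SO

noncomputable def JJ (γ : ℝ) : ℝ≥0∞ := ∫⁻ z in Metric.ball (0:ℂ) 2, ENNReal.ofReal (‖z‖ ^ (-γ))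

lemma JJ_lt {γ : ℝ} (hγ : γ < 2) : JJ γ < ⊤ := by
  have : IntegrableOn (fun z : ℂ => ‖z‖ ^ (-γ)) (Metric.ball 0 2) := by
    refine integrableOn_ball_of_norm_le_rpow (by simp) (C := 1) (α := γ) (by simpa using hγ) ?_
      (measurable_norm.pow_const _).aestronglyMeasurable
    refine Filter.Eventually.of_forall fun w => ?_
    rw [Real.norm_of_nonneg (by positivity), one_mul]
  have h := this.2
  rw [hasFiniteIntegral_iff_ofReal (Filter.Eventually.of_forall fun z => by positivity)] at h
  exact h

lemma JJ_shift (γ : ℝ) {w : ℂ} (hw : ‖w‖ < 1) :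
    ∫⁻ z in Metric.ball (0:ℂ) 1, ENNReal.ofReal (‖z - w‖ ^ (-γ)) ≤ JJ γ := by
  rw [JJ, ← lintegral_indicator measurableSet_ball, ← lintegral_indicator measurableSet_ball,
    ← lintegral_sub_right_eq_self (fun z : ℂ => (Metric.ball (0:ℂ) 2).indicator
      (fun z => ENNReal.ofReal (‖z‖ ^ (-γ))) z) w]
  refine lintegral_mono fun z => ?_
  by_cases hz : z ∈ Metric.ball (0:ℂ) 1
  · rw [indicator_of_mem hz, indicator_of_mem]
    rw [mem_ball_zero_iff] at *
    linarith [norm_sub_le z w]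
  · rw [indicator_of_notMem hz]; exact zero_le

lemma JJ_ball (γ : ℝ) :
    ∫⁻ z in Metric.ball (0:ℂ) 1, ENNReal.ofReal (‖z‖ ^ (-γ)) ≤ JJ γ := by
  simpa using JJ_shift γ (w := 0) (by simp)

lemma young {x y a b : ℝ} (hx : 0 < x) (hy : 0 < y) (ha : 0 ≤ a) (hb : 0 ≤ b) :
    x ^ (-a) * y ^ (-b) ≤ x ^ (-(a + b)) + y ^ (-(a + b)) := by
  have hx' : 0 ≤ x ^ (-(a+b)) := by positivity
  have hy' : 0 ≤ y ^ (-(a+b)) := by positivity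
  rcases le_total x y with h | h
  · have : x ^ (-a) * y ^ (-b) ≤ x ^ (-a) * x ^ (-b) :=
      mul_le_mul_of_nonneg_left (Real.rpow_le_rpow_of_nonpos hx h (by linarith)) (by positivity)
    rw [← Real.rpow_add hx, ← neg_add] at this
    linarith
  · have : x ^ (-a) * y ^ (-b) ≤ y ^ (-a) * y ^ (-b) :=
      mul_le_mul_of_nonneg_right (Real.rpow_le_rpow_of_nonpos hy h (by linarith)) (by positivity)
    rw [← Real.rpow_add hy, ← neg_add] at this
    linarith

lemma exp_kap {R b : ℝ} (hR : R ≤ 1) (hR0 : 0 < R) (hb : 0 ≤ b) (w : ℂ) :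
    Real.exp (b * kap R w) ≤ 1 + ‖w‖ ^ (-b) := by
  have h0 : 0 ≤ ‖w‖ ^ (-b) := by positivity
  have hl : Real.log R ≤ 0 := Real.log_nonpos hR0.le hR
  by_cases hw : w = 0
  · have : kap R w = 0 := by simp [kap, hw, hl]
    rw [this]; simp; positivity
  have hw' := norm_pos_iff.2 hw
  rcases le_total (Real.log R - Real.log ‖w‖) 0 with h | h
  · rw [kap, max_eq_right h]; simp; positivity
  · rw [kap, max_eq_left h, Real.rpow_def_of_pos hw']
    have : Real.exp (b * (Real.log R - Real.log ‖w‖)) ≤ Real.exp (Real.log ‖w‖ * -b) := by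
      rw [Real.exp_le_exp]; nlinarith
    linarith

lemma jensen_meas (μ : Measure ℂ) [IsFiniteMeasure μ] {f : ℂ → ℝ} (hf : Measurable f)
    (hf0 : ∀ w, 0 ≤ f w) {p b : ℝ} (hb : p * μ.real Set.univ ≤ b) :
    ENNReal.ofReal (Real.exp (p * ∫ w, f w ∂μ)) ≤
      1 + (μ Set.univ)⁻¹ * ∫⁻ w, ENNReal.ofReal (Real.exp (b * f w)) ∂μ := by
  by_cases hμ : μ = 0
  · simp [hμ]
  have : NeZero μ := ⟨hμ⟩
  by_cases hfi : Integrable f μ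
  swap
  · rw [integral_undef hfi]; simp
  refine le_trans ?_ le_add_self
  set m := μ.real Set.univ with hm
  have hm0 : 0 < m := by
    rw [hm, measureReal_def]
    exact ENNReal.toReal_pos (by simpa using hμ) (measure_ne_top _ _)
  have hle : ∫⁻ w, ENNReal.ofReal (Real.exp (p * m * f w)) ∂μ ≤
      ∫⁻ w, ENNReal.ofReal (Real.exp (b * f w)) ∂μ := by
    refine lintegral_mono fun w => ENNReal.ofReal_le_ofReal (Real.exp_le_exp.2 ?_)
    exact mul_le_mul_of_nonneg_right hb (hf0 w)
  refine le_trans ?_ (mul_le_mul_right hle _)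
  have hmeas : Measurable fun w => Real.exp (p * m * f w) :=
    Real.measurable_exp.comp (hf.const_mul _)
  by_cases hi : Integrable (fun w => Real.exp (p * m * f w)) μ
  · have j := convexOn_exp.map_average_le (μ := μ) (f := fun w => p * m * f w)
      Real.continuous_exp.continuousOn isClosed_univ (by simp) (hfi.const_mul _) hi
    rw [average_eq, average_eq, smul_eq_mul, smul_eq_mul, integral_const_mul] at j
    have e : m⁻¹ * (p * m * ∫ w, f w ∂μ) = p * ∫ w, f w ∂μ := by field_simp
    rw [← hm, e] at j
    refine (ENNReal.ofReal_le_ofReal j).trans (le_of_eq ?_)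
    rw [ENNReal.ofReal_mul (by positivity), ← ofReal_integral_eq_lintegral_ofReal hi
      (Filter.Eventually.of_forall fun _ => (Real.exp_pos _).le), ENNReal.ofReal_inv_of_pos hm0,
      hm, measureReal_def, ENNReal.ofReal_toReal (measure_ne_top _ _)]
  · have : ∫⁻ w, ENNReal.ofReal (Real.exp (p * m * f w)) ∂μ = ⊤ := by
      by_contra hne
      refine hi ⟨hmeas.aestronglyMeasurable, ?_⟩
      rw [hasFiniteIntegral_iff_ofReal (Filter.Eventually.of_forall fun z => (Real.exp_pos _).le)]
      exact lt_top_iff_ne_top.2 hne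
    rw [this, ENNReal.mul_top (by simp [measure_ne_top])]
    exact le_top

lemma pot (μ : Measure ℂ) [IsFiniteMeasure μ] (hμ : ∀ᵐ w ∂μ, ‖w‖ < 1) {R p a b : ℝ} (hR : R ≤ 1)
    (hR0 : 0 < R) (ha : 0 ≤ a) (hb0 : 0 < b)
    (hb : p * μ.real Set.univ ≤ b) :
    ∫⁻ z in Metric.ball (0:ℂ) 1, ENNReal.ofReal (‖z‖ ^ (-a)) *
      ENNReal.ofReal (Real.exp (p * ∫ w, kap R (z - w) ∂μ)) ≤
      JJ a + (JJ a + (JJ (a + b) + JJ (a + b))) := by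
  have mk : Measurable (kap R) := (LI_kap R).meas
  have h1 : ∀ z : ℂ, z ≠ 0 → ENNReal.ofReal (‖z‖ ^ (-a)) *
      ENNReal.ofReal (Real.exp (p * ∫ w, kap R (z - w) ∂μ)) ≤
      ENNReal.ofReal (‖z‖ ^ (-a)) + (μ Set.univ)⁻¹ * ∫⁻ w, (ENNReal.ofReal (‖z‖ ^ (-a)) +
        (ENNReal.ofReal (‖z‖ ^ (-(a+b))) + ENNReal.ofReal (‖z - w‖ ^ (-(a+b))))) ∂μ := by
    intro z hz
    have hz' := norm_pos_iff.2 hz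
    have j := jensen_meas μ (f := fun w => kap R (z - w)) (mk.comp (measurable_const.sub measurable_id))
      (fun w => kap_nonneg _ _) hb
    refine (mul_le_mul_right j _).trans ?_
    rw [mul_add, mul_one, mul_left_comm, ← lintegral_const_mul' _ _ ENNReal.ofReal_ne_top]
    gcongr with w
    rw [← ENNReal.ofReal_mul (by positivity), ← ENNReal.ofReal_add (by positivity) (by positivity),
      ← ENNReal.ofReal_add (by positivity) (by positivity)]
    refine ENNReal.ofReal_le_ofReal ?_
    have hk := exp_kap hR hR0 hb0.le (z - w)
    have hx : 0 ≤ ‖z‖ ^ (-a) := by positivity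
    refine (mul_le_mul_of_nonneg_left hk hx).trans ?_
    rw [mul_add, mul_one]
    gcongr
    rcases eq_or_ne (z - w) 0 with h0 | h0
    · rw [h0, norm_zero, Real.zero_rpow (by linarith), mul_zero]
      positivity
    · exact young hz' (norm_pos_iff.2 h0) ha hb0.le
  have h2 : ∫⁻ z in Metric.ball (0:ℂ) 1, ENNReal.ofReal (‖z‖ ^ (-a)) *
      ENNReal.ofReal (Real.exp (p * ∫ w, kap R (z - w) ∂μ)) ≤ ∫⁻ z in Metric.ball (0:ℂ) 1,
      (ENNReal.ofReal (‖z‖ ^ (-a)) + (μ Set.univ)⁻¹ * ∫⁻ w, (ENNReal.ofReal (‖z‖ ^ (-a)) +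
        (ENNReal.ofReal (‖z‖ ^ (-(a+b))) + ENNReal.ofReal (‖z - w‖ ^ (-(a+b))))) ∂μ) :=
    lintegral_mono_ae (by
      filter_upwards [ae_restrict_of_ae ae_ne_zero] with z hz using h1 z hz)
  refine h2.trans ?_
  by_cases hμ0 : μ = 0
  · simp only [hμ0, lintegral_zero_measure, mul_zero, add_zero]
    exact (JJ_ball a).trans le_self_add
  have hM0 : μ Set.univ ≠ 0 := by simpa using hμ0
  have hMt : μ Set.univ ≠ ⊤ := measure_ne_top _ _
  rw [lintegral_add_left (by fun_prop), lintegral_const_mul' _ _ (by simpa using hM0),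
    lintegral_lintegral_swap (by fun_prop)]
  refine add_le_add (JJ_ball a) ?_
  have h3 : ∫⁻ w, (∫⁻ z in Metric.ball (0:ℂ) 1, (ENNReal.ofReal (‖z‖ ^ (-a)) +
        (ENNReal.ofReal (‖z‖ ^ (-(a+b))) + ENNReal.ofReal (‖z - w‖ ^ (-(a+b)))))) ∂μ ≤
      ∫⁻ w, (JJ a + (JJ (a + b) + JJ (a + b))) ∂μ := by
    refine lintegral_mono_ae ?_
    filter_upwards [hμ] with w hw
    rw [lintegral_add_left (by fun_prop), lintegral_add_left (by fun_prop)]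
    gcongr
    · exact JJ_ball a
    · exact JJ_ball _
    · exact JJ_shift _ hw
  refine (mul_le_mul_right h3 _).trans ?_
  rw [lintegral_const, mul_comm _ (μ Set.univ), ← mul_assoc, ENNReal.inv_mul_cancel hM0 hMt, one_mul]

lemma step2 {ρ h r1 s p a b K : ℝ} {k : ℕ} {v : ℂ → ℝ} (hv : SH ρ v) (hh : 0 < h) (hhρ : h ≤ ρ / 4)
    (hs : 0 < s) (hsr : s ≤ r1) (hr1 : r1 ≤ ρ / 2) (hρ : ρ ≤ 1) (hK : -K ≤ ∫ z, v z)
    (hp : 0 < p) (ha : 0 ≤ a) (hb : 0 < b)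
    (m1 : p * ∫ w in Metric.ball 0 r1, gg h v w ≤ 2 * k + a)
    (m2 : p * ((∫ w in Metric.ball 0 r1, gg h v w) - ∫ w in Metric.ball 0 s, gg h v w) ≤ b) :
    ∫⁻ z in ann (2 * s) (r1 / 2), ENNReal.ofReal (‖z‖ ^ (2 * k) * Real.exp (-(p * UU h v z))) ≤
      ENNReal.ofReal (Real.exp (p * (K / volume.real (Metric.ball (0:ℂ) (r1 / 2))))) *
        (JJ a + (JJ a + (JJ (a + b) + JJ (a + b)))) := by
  have hr10 : 0 < r1 := hs.trans_le hsr
  set g := gg h v with hg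
  have gbs : BS g := hv.bs.gg h
  have gi := gbs.integrable
  have gpos : ∀ w : ℂ, ‖w‖ < r1 → 0 ≤ g w := fun w hw => gg_nonneg hv hh (by linarith)
  set μ : Measure ℂ := (volume.restrict (ann s r1)).withDensity fun w => ENNReal.ofReal (g w) with hμ
  have gae : 0 ≤ᵐ[volume.restrict (ann s r1)] g := by
    filter_upwards [ae_restrict_mem (meas_ann s r1)] with w hw using gpos w hw.2
  have hμu : μ Set.univ = ENNReal.ofReal (∫ w in ann s r1, g w) := by
    rw [hμ, withDensity_apply _ MeasurableSet.univ, Measure.restrict_univ,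
      ofReal_integral_eq_lintegral_ofReal gi.integrableOn gae]
  have : IsFiniteMeasure μ := ⟨by rw [hμu]; exact ENNReal.ofReal_lt_top⟩
  have gs0 : 0 ≤ ∫ w in ann s r1, g w := integral_nonneg_of_ae gae
  have hμr : μ.real Set.univ = ∫ w in ann s r1, g w := by
    rw [measureReal_def, hμu, ENNReal.toReal_ofReal gs0]
  have hun : Metric.ball (0:ℂ) r1 = Metric.ball 0 s ∪ ann s r1 := by
    ext w
    simp only [ann, mem_union, mem_ball_zero_iff, Set.mem_ofPred_eq]
    constructor
    · intro hw
      rcases lt_or_ge ‖w‖ s with h | h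
      · exact Or.inl h
      · exact Or.inr ⟨h, hw⟩
    · rintro (h | h)
      · exact h.trans_le hsr
      · exact h.2
  have hdis : Disjoint (Metric.ball (0:ℂ) s) (ann s r1) := by
    rw [Set.disjoint_left]
    intro w hw hw2
    rw [mem_ball_zero_iff] at hw
    exact absurd hw2.1 (not_le.2 hw)
  have hsplit : ∀ f : ℂ → ℝ, Integrable f → ∫ w in Metric.ball 0 r1, f w =
      (∫ w in Metric.ball 0 s, f w) + ∫ w in ann s r1, f w := by
    intro f hf
    rw [hun, setIntegral_union hdis (meas_ann s r1) hf.integrableOn hf.integrableOn]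
  have hg1 := hsplit g gi
  have ms0 : 0 ≤ ∫ w in Metric.ball 0 s, g w :=
    setIntegral_nonneg measurableSet_ball fun w hw => gpos w (by
      rw [mem_ball_zero_iff] at hw; linarith)
  have hpot := pot μ (R := r1 / 2) (p := p) (a := a) (b := b) (by
      rw [hμ]
      refine (withDensity_absolutelyContinuous _ _).ae_le ?_
      filter_upwards [ae_restrict_mem (meas_ann s r1)] with w hw
      linarith [hw.2]) (by linarith) (by linarith) ha hb (by
      rw [hμr]; rw [hg1] at m2; linarith)
  refine le_trans ?_ (mul_le_mul_right hpot _)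
  rw [← lintegral_const_mul' _ _ ENNReal.ofReal_ne_top]
  refine le_trans (setLIntegral_mono' (g := fun z => ENNReal.ofReal (Real.exp (p * (K / volume.real (Metric.ball (0:ℂ) (r1 / 2))))) * (ENNReal.ofReal (‖z‖ ^ (-a)) *
      ENNReal.ofReal (Real.exp (p * ∫ w, kap (r1 / 2) (z - w) ∂μ)))) (meas_ann _ _) fun z hz => ?_)
    (lintegral_mono_set (fun z hz => by
      rw [mem_ball_zero_iff]; linarith [hz.2]))
  obtain ⟨hz1, hz2⟩ := hz
  have hz0 : 0 < ‖z‖ := by linarith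
  rw [← ENNReal.ofReal_mul (by positivity), ← ENNReal.ofReal_mul (by positivity)]
  refine ENNReal.ofReal_le_ofReal ?_
  have hlow := lower hv hh hhρ (R := r1 / 2) (z := z) (by linarith) (by linarith) hK
  have hint := star_int hv.bs h (r1 / 2) z
  have hsupp : ∫ w, kap (r1 / 2) (z - w) * g w =
      ∫ w in Metric.ball 0 r1, kap (r1 / 2) (z - w) * g w := by
    rw [setIntegral_eq_integral_of_forall_compl_eq_zero]
    intro w hw
    rw [mem_ball_zero_iff, not_lt] at hw
    rw [kap_zero (by linarith), zero_mul]
    linarith [norm_sub_norm_le w z, norm_sub_rev w z]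
  have hμi : ∫ w, kap (r1 / 2) (z - w) ∂μ = ∫ w in ann s r1, kap (r1 / 2) (z - w) * g w := by
    rw [hμ, integral_withDensity_eq_integral_toReal_smul (by
      exact gbs.meas.ennreal_ofReal) (by simp)]
    refine setIntegral_congr_fun (meas_ann s r1) fun w hw => ?_
    simp only [smul_eq_mul]
    rw [ENNReal.toReal_ofReal (gpos w hw.2), mul_comm]
  have hin : ∫ w in Metric.ball 0 s, kap (r1 / 2) (z - w) * g w ≤
      Real.log (r1 / ‖z‖) * ∫ w in Metric.ball 0 s, g w := by
    rw [← integral_const_mul]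
    refine setIntegral_mono_on (Integrable.integrableOn hint) (gi.const_mul _).integrableOn measurableSet_ball
      fun w hw => ?_
    rw [mem_ball_zero_iff] at hw
    refine mul_le_mul_of_nonneg_right ?_ (gpos w (by linarith))
    have hzw : ‖z‖ / 2 ≤ ‖z - w‖ := by linarith [norm_sub_norm_le z w]
    rw [Real.log_div hr10.ne' hz0.ne']
    refine max_le ?_ (by linarith [Real.log_le_log hz0 (show ‖z‖ ≤ r1 by linarith)])
    have := Real.log_le_log (by positivity) hzw
    rw [Real.log_div hz0.ne' (by norm_num)] at this
    rw [Real.log_div hr10.ne' (by norm_num)]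
    linarith
  rw [hsplit _ hint, ← hμi] at hsupp
  set P := ∫ w, kap (r1 / 2) (z - w) ∂μ
  set ms := ∫ w in Metric.ball 0 s, g w
  set C0 := K / volume.real (Metric.ball (0:ℂ) (r1 / 2)) with hC0
  rw [neg_div, ← hC0, hsupp] at hlow
  have hlog1 : Real.log (r1 / ‖z‖) ≤ -Real.log ‖z‖ := by
    rw [Real.log_div hr10.ne' hz0.ne']
    linarith [Real.log_nonpos hr10.le (by linarith)]
  have hU : -(p * UU h v z) ≤ p * C0 + (-Real.log ‖z‖) * (2 * k + a) + p * P := by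
    have e1 : Real.log (r1 / ‖z‖) * ms ≤ (-Real.log ‖z‖) * ms :=
      mul_le_mul_of_nonneg_right hlog1 ms0
    have e2 : -UU h v z ≤ C0 + (-Real.log ‖z‖) * ms + P := by linarith
    have e3 := mul_le_mul_of_nonneg_left e2 hp.le
    have e4 : p * ms ≤ 2 * k + a := by
      rw [hg1] at m1
      nlinarith
    have e5 := mul_le_mul_of_nonneg_left e4 (show 0 ≤ -Real.log ‖z‖ by
      linarith [Real.log_nonpos hz0.le (by linarith)])
    linarith
  have hE := Real.exp_le_exp.2 hU
  rw [Real.exp_add, Real.exp_add] at hE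
  refine (mul_le_mul_of_nonneg_left hE (by positivity)).trans (le_of_eq ?_)
  have : ‖z‖ ^ (2 * k) * Real.exp (-Real.log ‖z‖ * (2 * k + a)) = ‖z‖ ^ (-a) := by
    rw [Real.rpow_def_of_pos hz0, ← Real.rpow_natCast, Real.rpow_def_of_pos hz0, ← Real.exp_add]
    congr 1
    push_cast
    ring
  rw [← this]
  ring

end SO

namespace SO

lemma seq {ρ : ℝ} (hρ0 : 0 < ρ) (hρ : ρ ≤ 1) (k : ℕ) (I K : ℝ) (v : ℕ → ℂ → ℝ) (h : ℕ → ℝ)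
    (hv : ∀ n, SH ρ (v n)) (hh : ∀ n, 0 < h n) (hhρ : ∀ n, h n ≤ ρ / 4)
    (hI : ∀ n, (∫ z in Metric.ball 0 (ρ / 2), ‖z‖ ^ (2 * k) * Real.exp (-v n z)) ≤ I)
    (hK : ∀ n, -K ≤ ∫ z, v n z) :
    ∃ r1, 0 < r1 ∧ r1 ≤ ρ / 2 ∧ ∃ p : ℝ, 1 < p ∧ ∃ C : ℝ≥0∞, C < ⊤ ∧ ∀ s, 0 < s → s ≤ r1 →
      ∃ᶠ n in atTop, ∫⁻ z in ann (2 * s) (r1 / 2),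
        ENNReal.ofReal (‖z‖ ^ (2 * k) * Real.exp (-(p * UU (h n) (v n) z))) ≤ C := by
  obtain ⟨s0, hs0, hs0ρ, β, hβ, hmass⟩ := mass_bound hρ0 k I
  set m : ℕ → ℝ → ℝ := fun n r => ∫ w in Metric.ball 0 r, gg (h n) (v n) w with hm
  set S : Set ℝ := {c | ∃ r, 0 < r ∧ r ≤ ρ / 2 ∧ ∀ᶠ n in atTop, m n r ≤ c} with hS
  have hβS : β ∈ S := ⟨s0, hs0, hs0ρ.le, Filter.Eventually.of_forall fun n =>
    hmass (v n) (h n) (hv n) (hh n) (hhρ n) (hI n)⟩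
  have hbd : BddBelow S := by
    refine ⟨0, ?_⟩
    rintro c ⟨r, hr, hrρ, hc⟩
    obtain ⟨n, hn⟩ := hc.exists
    refine le_trans ?_ hn
    refine setIntegral_nonneg measurableSet_ball fun w hw => gg_nonneg (hv n) (hh n) ?_
    rw [mem_ball_zero_iff] at hw
    linarith [hhρ n]
  set ν := sInf S with hν
  have hνβ : ν ≤ β := csInf_le hbd hβS
  have hν0 : 0 ≤ ν := by
    refine le_csInf ⟨β, hβS⟩ ?_
    rintro c ⟨r, hr, hrρ, hc⟩
    obtain ⟨n, hn⟩ := hc.exists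
    refine le_trans ?_ hn
    refine setIntegral_nonneg measurableSet_ball fun w hw => gg_nonneg (hv n) (hh n) ?_
    rw [mem_ball_zero_iff] at hw
    linarith [hhρ n]
  set D : ℝ := 2 * k + 2 with hD
  have hD0 : 0 < D := by positivity
  set δ := D - ν with hδ
  have hδ0 : 0 < δ := by linarith
  set ε := min (δ / 6) (1 / 4) with hε
  have hε0 : 0 < ε := lt_min (by linarith) (by norm_num)
  have hε1 : ε ≤ δ / 6 := min_le_left _ _
  have hε2 : ε ≤ 1 / 4 := min_le_right _ _
  set p := 1 + δ / (4 * D) with hp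
  have hpq : 0 < δ / (4 * D) := by positivity
  have hp1 : 1 < p := by linarith
  have hp2 : p ≤ 5 / 4 := by
    have : δ / (4 * D) ≤ 1 / 4 := by rw [div_le_iff₀ (by positivity)]; linarith
    linarith
  have hpD : p * (ν + 3 * ε) < D := by
    have e1 : ν + 3 * ε ≤ D - δ / 2 := by linarith
    have e2 := mul_le_mul_of_nonneg_left e1 (show 0 ≤ p by linarith)
    have e3 : δ / (4 * D) * D = δ / 4 := by field_simp
    have e4 : 0 < δ / (4 * D) * δ := by positivity
    have e5 : p * (D - δ / 2) = D + δ / (4 * D) * D - δ / 2 - δ / (4 * D) * δ / 2 := by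
      rw [hp]; ring
    linarith
  set a := max (p * (ν + ε) - 2 * k) 0 with ha
  have hab : a + 2 * p * ε < 2 := by
    rcases max_choice (p * (ν + ε) - 2 * k) 0 with h | h
    · rw [ha, h]; linarith
    · rw [ha, h]; nlinarith
  have ha0 : 0 ≤ a := le_max_right _ _
  have ha1 : p * (ν + ε) - 2 * k ≤ a := le_max_left _ _
  obtain ⟨c, ⟨r1, hr1, hr1ρ, hc⟩, hcν⟩ := exists_lt_of_csInf_lt ⟨β, hβS⟩
    (show sInf S < ν + ε by linarith)
  refine ⟨r1, hr1, hr1ρ, p, hp1,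
    ENNReal.ofReal (Real.exp (p * (K / volume.real (Metric.ball (0:ℂ) (r1 / 2))))) *
        (JJ a + (JJ a + (JJ (a + 2 * p * ε) + JJ (a + 2 * p * ε)))), ?_, fun s hs hsr => ?_⟩
  · have j1 := JJ_lt (γ := a) (by nlinarith)
    have j2 := JJ_lt hab
    refine ENNReal.mul_lt_top ENNReal.ofReal_lt_top ?_
    simp [ENNReal.add_lt_top, j1, j2]
  · have hf : ∃ᶠ n in atTop, ν - ε < m n s := by
      have := notMem_of_lt_csInf (show ν - ε < sInf S by linarith) hbd
      by_contra hcon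
      rw [Filter.not_frequently] at hcon
      exact this ⟨s, hs, hsr.trans hr1ρ, hcon.mono fun n hn => not_lt.1 hn⟩
    refine (hf.and_eventually hc).mono ?_
    rintro n ⟨hn1, hn2⟩
    refine step2 (hv n) (hh n) (hhρ n) hs hsr hr1ρ hρ (hK n) (by linarith) ha0
      (by positivity) ?_ ?_
    · have : p * m n r1 ≤ p * (ν + ε) := mul_le_mul_of_nonneg_left (by linarith) (by linarith)
      linarith
    · have : p * (m n r1 - m n s) ≤ p * (2 * ε) :=
        mul_le_mul_of_nonneg_left (by linarith) (by linarith)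
      linarith

lemma ball_ann {r : ℝ} (hr : 0 < r) (f : ℂ → ℝ≥0∞) (C : ℝ≥0∞)
    (h : ∀ s, 0 < s → s < r → ∫⁻ z in ann s r, f z ≤ C) :
    ∫⁻ z in Metric.ball 0 r, f z ≤ C := by
  have h3 : Metric.ball (0:ℂ) r =ᵐ[volume] ⋃ n : ℕ, ann (r / (n + 2)) r := by
    filter_upwards [ae_ne_zero] with z hz
    refine propext ⟨fun h => ?_, fun h => ?_⟩
    · have hz' := norm_pos_iff.2 hz
      obtain ⟨n, hn⟩ := exists_nat_gt (r / ‖z‖)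
      refine Set.mem_iUnion.2 ⟨n, ?_, by
        have h' : z ∈ Metric.ball (0:ℂ) r := h
        simpa using h'⟩
      rw [div_lt_iff₀ hz'] at hn
      rw [div_le_iff₀ (by positivity)]
      nlinarith
    · obtain ⟨n, hn⟩ := Set.mem_iUnion.1 h
      exact ann_sub _ _ hn
  have hmono : Monotone fun n : ℕ => ann (r / ((n:ℝ) + 2)) r := by
    intro a b hab z hz
    refine ⟨le_trans ?_ hz.1, hz.2⟩
    gcongr
  rw [setLIntegral_congr h3, setLIntegral_iUnion_of_directed _ hmono.directed_le]
  refine iSup_le fun n => h _ (by positivity) ?_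
  rw [div_lt_iff₀ (by positivity)]
  nlinarith [(Nat.cast_nonneg n : (0:ℝ) ≤ n)]

end SO

namespace SO

variable {φ : ℂ → EReal}

/-- truncated, cut off potential -/
noncomputable def vv (φ : ℂ → EReal) (ρ : ℝ) (n : ℕ) : ℂ → ℝ :=
  (Metric.ball (0:ℂ) ρ).indicator fun z => (φ z ⊔ ((-(n:ℝ) : ℝ) : EReal)).toReal

lemma usc_nhds (hsub : SubharmonicOn φ (Metric.ball 0 1)) {z : ℂ} (hz : z ∈ Metric.ball (0:ℂ) 1)
    {y : EReal} (hy : φ z < y) : ∀ᶠ w in nhds z, φ w < y := by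
  have h := upperSemicontinuousWithinAt_iff.1 (hsub.1 z hz) y hy
  rwa [Metric.isOpen_ball.nhdsWithin_eq hz] at h

open Classical in
lemma ext_meas (hsub : SubharmonicOn φ (Metric.ball 0 1)) :
    Measurable fun z => if z ∈ Metric.ball (0:ℂ) 1 then φ z else ⊤ := by
  refine UpperSemicontinuous.measurable fun z => ?_
  refine upperSemicontinuousAt_iff.2 ?_
  intro y hy
  by_cases hz : z ∈ Metric.ball (0:ℂ) 1
  · simp only [hz, if_true] at hy
    filter_upwards [usc_nhds hsub hz hy, Metric.isOpen_ball.mem_nhds hz] with w hw hw2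
    simpa only [hw2, if_true] using hw
  · simp only [hz, if_false] at hy
    exact absurd hy not_top_lt

lemma vv_meas (hsub : SubharmonicOn φ (Metric.ball 0 1)) {ρ : ℝ} (hρ : ρ < 1) (n : ℕ) :
    Measurable (vv φ ρ n) := by
  classical
  have h : vv φ ρ n = (Metric.ball (0:ℂ) ρ).indicator fun z =>
      ((if z ∈ Metric.ball (0:ℂ) 1 then φ z else ⊤) ⊔ ((-(n:ℝ) : ℝ) : EReal)).toReal := by
    refine Set.indicator_congr fun z hz => ?_
    rw [if_pos (Metric.ball_subset_ball hρ.le hz)]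
  rw [h]
  refine Measurable.indicator ?_ measurableSet_ball
  exact measurable_ereal_toReal.comp ((ext_meas hsub).sup measurable_const)

lemma coe_vv (hneg : ∀ z ∈ Metric.ball (0 : ℂ) 1, φ z < 0) {ρ : ℝ} (hρ : ρ < 1) (n : ℕ) {z : ℂ}
    (hz : z ∈ Metric.ball (0:ℂ) ρ) : ((vv φ ρ n z : ℝ) : EReal) = φ z ⊔ ((-(n:ℝ) : ℝ) : EReal) := by
  have h1 := hneg z (Metric.ball_subset_ball hρ.le hz)
  rw [vv, indicator_of_mem hz, EReal.coe_toReal]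
  · refine ne_of_lt (max_lt (h1.trans (EReal.zero_lt_top)) (EReal.coe_lt_top _))
  · exact ne_of_gt (lt_of_lt_of_le (EReal.bot_lt_coe _) le_sup_right)

lemma vv_npos (hneg : ∀ z ∈ Metric.ball (0 : ℂ) 1, φ z < 0) {ρ : ℝ} (hρ : ρ < 1) (n : ℕ) (z : ℂ) :
    vv φ ρ n z ≤ 0 := by
  by_cases hz : z ∈ Metric.ball (0:ℂ) ρ
  · rw [← EReal.coe_le_coe_iff, coe_vv hneg hρ n hz]
    refine max_le (hneg z (Metric.ball_subset_ball hρ.le hz)).le ?_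
    rw [EReal.coe_le_coe_iff]
    simp
  · rw [vv, indicator_of_notMem hz]

lemma vv_ge (hneg : ∀ z ∈ Metric.ball (0 : ℂ) 1, φ z < 0) {ρ : ℝ} (hρ : ρ < 1) (n : ℕ) (z : ℂ) :
    -(n:ℝ) ≤ vv φ ρ n z := by
  by_cases hz : z ∈ Metric.ball (0:ℂ) ρ
  · rw [← EReal.coe_le_coe_iff, coe_vv hneg hρ n hz]
    exact le_sup_right
  · rw [vv, indicator_of_notMem hz]; simp

lemma vv_bs (hsub : SubharmonicOn φ (Metric.ball 0 1))
    (hneg : ∀ z ∈ Metric.ball (0 : ℂ) 1, φ z < 0) {ρ : ℝ} (hρ : ρ < 1) (n : ℕ) :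
    BS (vv φ ρ n) := by
  refine ⟨vv_meas hsub hρ n, ⟨n, fun z => ?_⟩, ⟨ρ, fun z hz => ?_⟩⟩
  · rw [abs_le]
    exact ⟨vv_ge hneg hρ n z, (vv_npos hneg hρ n z).trans (Nat.cast_nonneg n)⟩
  · rw [vv, indicator_of_notMem]
    simp [hz.le]

lemma vv_SH (hsub : SubharmonicOn φ (Metric.ball 0 1))
    (hneg : ∀ z ∈ Metric.ball (0 : ℂ) 1, φ z < 0) {ρ : ℝ} (hρ : ρ < 1) (n : ℕ) :
    SH ρ (vv φ ρ n) := by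
  have hbs := vv_bs hsub hneg hρ n
  refine ⟨hbs, vv_npos hneg hρ n, fun z r hr hzr => ?_⟩
  have hzρ : z ∈ Metric.ball (0:ℂ) ρ := by rw [mem_ball_zero_iff]; linarith
  have h1 := hsub.2.2.2 z (Metric.ball_subset_ball hρ.le hzρ) r hr (fun t ht => by
    rw [mem_ball_zero_iff]; linarith [norm_add_le z t]) (-(n:ℝ))
  have h2 : (2 * Real.pi)⁻¹ * ∫ θ in (0 : ℝ)..(2 * Real.pi),
        (φ (z + (r : ℂ) * Complex.exp (θ * Complex.I)) ⊔ ((-(n:ℝ) : ℝ) : EReal)).toReal =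
      Real.circleAverage (vv φ ρ n) z r := by
    rw [Real.circleAverage_def, smul_eq_mul]
    congr 1
    refine intervalIntegral.integral_congr fun θ _ => ?_
    have hm : circleMap z r θ ∈ Metric.ball (0:ℂ) ρ := by
      have := norm_circleMap_le z r θ
      rw [abs_of_pos hr] at this
      rw [mem_ball_zero_iff]; linarith
    rw [vv, indicator_of_mem hm]
    rfl
  rw [h2] at h1
  rw [← EReal.coe_le_coe_iff, coe_vv hneg hρ n hzρ]
  refine max_le h1 ?_
  rw [EReal.coe_le_coe_iff, Real.circleAverage_def, smul_eq_mul]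
  have h3 : ∫ θ in (0 : ℝ)..(2 * Real.pi), (-(n:ℝ)) ≤
      ∫ θ in (0 : ℝ)..(2 * Real.pi), vv φ ρ n (circleMap z r θ) :=
    intervalIntegral.integral_mono_on Real.two_pi_pos.le (by simp) (hbs.nice.circ z r)
      fun θ _ => vv_ge hneg hρ n _
  rw [intervalIntegral.integral_const, smul_eq_mul, sub_zero] at h3
  have h4 := mul_le_mul_of_nonneg_left h3 (inv_nonneg.2 Real.two_pi_pos.le)
  rwa [← mul_assoc, inv_mul_cancel₀ Real.two_pi_pos.ne', one_mul] at h4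

lemma exp_vv_le (hneg : ∀ z ∈ Metric.ball (0 : ℂ) 1, φ z < 0) {ρ : ℝ} (hρ : ρ < 1) (n : ℕ) {z : ℂ}
    (hz : z ∈ Metric.ball (0:ℂ) ρ) :
    ENNReal.ofReal (Real.exp (-vv φ ρ n z)) ≤ EReal.exp (-(φ z)) := by
  rw [← EReal.exp_coe, EReal.exp_le_exp_iff, EReal.coe_neg, EReal.neg_le_neg_iff,
    coe_vv hneg hρ n hz]
  exact le_sup_left

lemma vv_exp_int (hsub : SubharmonicOn φ (Metric.ball 0 1))
    (hneg : ∀ z ∈ Metric.ball (0 : ℂ) 1, φ z < 0) {ρ : ℝ} (hρ : ρ < 1) (n k : ℕ) :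
    IntegrableOn (fun z => ‖z‖ ^ (2 * k) * Real.exp (-vv φ ρ n z)) (Metric.ball 0 ρ) := by
  refine Integrable.mono' (g := fun _ => 1 * Real.exp n)
      (integrableOn_const measure_ball_lt_top.ne) ?_ ?_
  · exact ((measurable_norm.pow_const _).mul
        (Real.measurable_exp.comp (vv_meas hsub hρ n).neg)).aestronglyMeasurable
  · filter_upwards [ae_restrict_mem measurableSet_ball] with z hz
    have hz' : ‖z‖ < ρ := by simpa using hz
    rw [Real.norm_of_nonneg (by positivity)]
    have : -vv φ ρ n z ≤ n := by linarith [vv_ge hneg hρ n z]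
    gcongr
    exact pow_le_one₀ (norm_nonneg _) (by linarith)

lemma vv_I (hsub : SubharmonicOn φ (Metric.ball 0 1))
    (hneg : ∀ z ∈ Metric.ball (0 : ℂ) 1, φ z < 0) {ρ : ℝ} (hρ : ρ < 1) (k : ℕ)
    (hL : ∫⁻ z in Metric.ball (0:ℂ) ρ, ENNReal.ofReal (‖z‖ ^ (2 * k)) * EReal.exp (-(φ z)) < ⊤)
    (n : ℕ) :
    (∫ z in Metric.ball 0 ρ, ‖z‖ ^ (2 * k) * Real.exp (-vv φ ρ n z)) ≤
    (∫⁻ z in Metric.ball (0:ℂ) ρ, ENNReal.ofReal (‖z‖ ^ (2 * k)) * EReal.exp (-(φ z))).toReal := by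
  rw [integral_eq_lintegral_of_nonneg_ae (Filter.Eventually.of_forall fun z => by positivity)
    (vv_exp_int hsub hneg hρ n k).1]
  refine ENNReal.toReal_mono hL.ne (setLIntegral_mono' measurableSet_ball fun z hz => ?_)
  rw [ENNReal.ofReal_mul (by positivity)]
  gcongr
  exact exp_vv_le hneg hρ n hz

lemma vv_K (hsub : SubharmonicOn φ (Metric.ball 0 1))
    (hneg : ∀ z ∈ Metric.ball (0 : ℂ) 1, φ z < 0) {ρ : ℝ} (hρ : ρ < 1) (k : ℕ)
    (hL : ∫⁻ z in Metric.ball (0:ℂ) ρ, ENNReal.ofReal (‖z‖ ^ (2 * k)) * EReal.exp (-(φ z)) < ⊤) :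
    ∃ K : ℝ, ∀ n, -K ≤ ∫ z, vv φ ρ n z := by
  refine ⟨(∫⁻ z in Metric.ball (0:ℂ) ρ, ENNReal.ofReal (‖z‖ ^ (2 * k)) *
    EReal.exp (-(φ z))).toReal - ∫ z in Metric.ball (0:ℂ) ρ, 2 * k * Real.log ‖z‖, fun n => ?_⟩
  have hi := vv_exp_int hsub hneg hρ n k
  have hl : IntegrableOn (fun z : ℂ => 2 * k * Real.log ‖z‖) (Metric.ball 0 ρ) :=
    (LI_log.int ρ).const_mul _
  have hbs := vv_bs hsub hneg hρ n
  have e : ∫ z, vv φ ρ n z = ∫ z in Metric.ball 0 ρ, vv φ ρ n z := by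
    rw [setIntegral_eq_integral_of_forall_compl_eq_zero]
    intro z hz
    rw [vv, indicator_of_notMem hz]
  have h1 : ∫ z in Metric.ball 0 ρ, -vv φ ρ n z ≤
      ∫ z in Metric.ball (0:ℂ) ρ, (‖z‖ ^ (2 * k) * Real.exp (-vv φ ρ n z) - 2 * k * Real.log ‖z‖) := by
    refine integral_mono_ae hbs.integrable.neg.integrableOn (hi.sub hl) ?_
    filter_upwards [ae_restrict_of_ae ae_ne_zero] with z hz
    have hz0 := norm_pos_iff.2 hz
    have h2 := Real.add_one_le_exp (2 * k * Real.log ‖z‖ + -vv φ ρ n z)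
    rw [Real.exp_add] at h2
    have h3 : Real.exp (2 * k * Real.log ‖z‖) = ‖z‖ ^ (2 * k) := by
      rw [← Real.rpow_natCast, Real.rpow_def_of_pos hz0, mul_comm]
      push_cast; rfl
    rw [h3] at h2
    linarith
  rw [integral_sub hi hl, integral_neg] at h1
  have := vv_I hsub hneg hρ k hL n
  rw [e]
  linarith

lemma UU_ev (hsub : SubharmonicOn φ (Metric.ball 0 1))
    (hneg : ∀ z ∈ Metric.ball (0 : ℂ) 1, φ z < 0) {ρ : ℝ} (hρ : ρ < 1) {h : ℕ → ℝ}
    (hh : ∀ n, 0 < h n) (hlim : Tendsto h atTop (nhds 0)) {z : ℂ} (hz : z ∈ Metric.ball (0:ℂ) ρ)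
    {t : ℝ} (ht : φ z < t) : ∀ᶠ n in atTop, UU (h n) (vv φ ρ n) z ≤ t := by
  have hu := usc_nhds hsub (Metric.ball_subset_ball hρ.le hz) ht
  obtain ⟨δ, hδ, hball⟩ := Metric.eventually_nhds_iff_ball.1
    (hu.and (Metric.isOpen_ball.mem_nhds hz))
  obtain ⟨N, hN⟩ := exists_nat_ge (-t)
  filter_upwards [hlim.eventually (gt_mem_nhds hδ), eventually_ge_atTop N] with n hn1 hn2
  refine UU_le (vv_bs hsub hneg hρ n) (hh n) fun w hw => ?_
  have hw' := hball (z - w) (by simpa [dist_eq_norm] using hw.trans hn1)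
  rw [← EReal.coe_le_coe_iff, coe_vv hneg hρ n hw'.2]
  refine max_le hw'.1.le ?_
  rw [EReal.coe_le_coe_iff]
  have : (N:ℝ) ≤ n := by exact_mod_cast hn2
  linarith

lemma fatou_pt (hsub : SubharmonicOn φ (Metric.ball 0 1))
    (hneg : ∀ z ∈ Metric.ball (0 : ℂ) 1, φ z < 0) {ρ : ℝ} (hρ : ρ < 1) {h : ℕ → ℝ}
    (hh : ∀ n, 0 < h n) (hlim : Tendsto h atTop (nhds 0)) {z : ℂ} (hz : z ∈ Metric.ball (0:ℂ) ρ)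
    (hz0 : z ≠ 0) {p : ℝ} (hp : 0 < p) (k : ℕ) :
    ENNReal.ofReal (‖z‖ ^ (2 * k)) * EReal.exp (-((p : EReal) * φ z)) ≤
      liminf (fun n => ENNReal.ofReal (‖z‖ ^ (2 * k) *
        Real.exp (-(p * UU (h n) (vv φ ρ n) z)))) atTop := by
  set L := liminf (fun n => ENNReal.ofReal (‖z‖ ^ (2 * k) *
        Real.exp (-(p * UU (h n) (vv φ ρ n) z)))) atTop with hL
  have key : ∀ t : ℝ, φ z < t → ENNReal.ofReal (‖z‖ ^ (2 * k) * Real.exp (-(p * t))) ≤ L := by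
    intro t ht
    refine le_liminf_of_le (by isBoundedDefault) ?_
    filter_upwards [UU_ev hsub hneg hρ hh hlim hz ht] with n hn
    gcongr
  have hz0' := norm_pos_iff.2 hz0
  have hA : 0 < ‖z‖ ^ (2 * k) := by positivity
  induction hφ : φ z with
  | bot =>
    have : Tendsto (fun t : ℝ => ENNReal.ofReal (‖z‖ ^ (2 * k) * Real.exp (-(p * t)))) atBot
        (nhds ⊤) := by
      refine ENNReal.tendsto_ofReal_atTop.comp ?_
      refine Tendsto.const_mul_atTop hA (Real.tendsto_exp_atTop.comp ?_)
      refine tendsto_neg_atBot_atTop.comp (tendsto_id.const_mul_atBot hp)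
    have hle : ⊤ ≤ L := le_of_tendsto this (Filter.Eventually.of_forall fun t => key t (by
      rw [hφ]; exact EReal.bot_lt_coe t))
    exact le_top.trans hle
  | top => exact absurd (hneg z (Metric.ball_subset_ball hρ.le hz)) (by rw [hφ]; simp)
  | coe x =>
    rw [← EReal.coe_mul, ← EReal.coe_neg, EReal.exp_coe, ← ENNReal.ofReal_mul hA.le]
    have : Tendsto (fun t : ℝ => ENNReal.ofReal (‖z‖ ^ (2 * k) * Real.exp (-(p * t))))
        (nhdsWithin x (Ioi x)) (nhds (ENNReal.ofReal (‖z‖ ^ (2 * k) * Real.exp (-(p * x))))) := by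
      refine Tendsto.mono_left (Continuous.tendsto ?_ x) nhdsWithin_le_nhds
      refine ENNReal.continuous_ofReal.comp (by fun_prop)
    refine le_of_tendsto this ?_
    filter_upwards [self_mem_nhdsWithin] with t ht
    exact key t (by rw [hφ]; exact_mod_cast ht)

lemma core (hsub : SubharmonicOn φ (Metric.ball 0 1))
    (hneg : ∀ z ∈ Metric.ball (0 : ℂ) 1, φ z < 0) {ρ : ℝ} (hρ0 : 0 < ρ) (hρ : ρ < 1) (k : ℕ)
    (hL : ∫⁻ z in Metric.ball (0:ℂ) ρ, ENNReal.ofReal (‖z‖ ^ (2 * k)) * EReal.exp (-(φ z)) < ⊤) :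
    ∃ r, 0 < r ∧ r ≤ ρ ∧ ∃ p : ℝ, 1 < p ∧ ∫⁻ z in Metric.ball (0:ℂ) r,
      ENNReal.ofReal (‖z‖ ^ (2 * k)) * EReal.exp (-((p : EReal) * φ z)) < ⊤ := by
  obtain ⟨K, hK⟩ := vv_K hsub hneg hρ k hL
  set h : ℕ → ℝ := fun n => ρ / 4 / ((n:ℝ) + 1) with hh
  have hh0 : ∀ n, 0 < h n := fun n => by positivity
  have hh1 : ∀ n, h n ≤ ρ / 4 := fun n => div_le_self (by positivity) (by
    linarith [(Nat.cast_nonneg n : (0:ℝ) ≤ n)])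
  have hlim : Tendsto h atTop (nhds 0) := by
    have := (tendsto_one_div_add_atTop_nhds_zero_nat (𝕜 := ℝ)).const_mul (ρ / 4)
    simpa [hh, div_eq_mul_inv] using this
  obtain ⟨r1, hr1, hr1ρ, p, hp, C, hC, hfr⟩ := seq hρ0 hρ.le k _ K (vv φ ρ) h
    (vv_SH hsub hneg hρ) hh0 hh1 (fun n => le_trans (setIntegral_mono_set
      (vv_exp_int hsub hneg hρ n k) (Filter.Eventually.of_forall fun z => by
        simp only [Pi.zero_apply]; positivity)
      (Metric.ball_subset_ball (by linarith)).eventuallyLE) (vv_I hsub hneg hρ k hL n)) hK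
  refine ⟨r1 / 2, by linarith, by linarith, p, hp, lt_of_le_of_lt ?_ hC⟩
  refine ball_ann (by linarith) _ _ fun s hs hsr => ?_
  have hf := hfr (s / 2) (by linarith) (by linarith)
  rw [mul_div_cancel₀ _ (two_ne_zero)] at hf
  refine le_trans (setLIntegral_mono' (meas_ann _ _) fun z hz => ?_) (le_trans
    (lintegral_liminf_le (μ := volume.restrict (ann s (r1 / 2))) (f := fun n z =>
      ENNReal.ofReal (‖z‖ ^ (2 * k) * Real.exp (-(p * UU (h n) (vv φ ρ n) z)))) fun n => ?_)
    (Filter.liminf_le_of_frequently_le hf (by isBoundedDefault)))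
  · refine fatou_pt hsub hneg hρ hh0 hlim ?_ ?_ (by linarith) k
    · rw [mem_ball_zero_iff]; linarith [hz.2]
    · exact norm_pos_iff.1 (hs.trans_le hz.1)
  · exact ((measurable_norm.pow_const _).mul (Real.measurable_exp.comp
      (((vv_bs hsub hneg hρ n).UU (h n)).meas.const_mul p).neg)).ennreal_ofReal

end SO

theorem stmt_1 (φ : ℂ → EReal)
    (hsub : SubharmonicOn φ (Metric.ball 0 1))
    (hneg : ∀ z ∈ Metric.ball (0 : ℂ) 1, φ z < 0)
    (F : ℂ → ℂ) (hF : DifferentiableOn ℂ F (Metric.ball 0 1))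
    (hint : ∫⁻ z in Metric.ball (0 : ℂ) 1,
        ENNReal.ofReal (‖F z‖ ^ 2) * EReal.exp (-(φ z)) < ⊤) :
    ∃ r ∈ Set.Ioo (0 : ℝ) 1, ∃ p : ℝ, 1 < p ∧
      ∫⁻ z in Metric.ball (0 : ℂ) r,
        ENNReal.ofReal (‖F z‖ ^ 2) * EReal.exp (-((p : EReal) * φ z)) < ⊤ := by
  have hFa : AnalyticAt ℂ F 0 :=
    hF.analyticAt (Metric.ball_mem_nhds 0 one_pos)
  by_cases h0 : ∀ᶠ z in nhds (0:ℂ), F z = 0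
  · obtain ⟨δ, hδ, hb⟩ := Metric.eventually_nhds_iff_ball.1 h0
    refine ⟨min δ (1 / 2), ⟨lt_min hδ (by norm_num), (min_le_right _ _).trans_lt (by norm_num)⟩, 2,
      by norm_num, ?_⟩
    rw [setLIntegral_congr_fun (g := fun _ => 0) measurableSet_ball (fun z hz => ?_)]
    · simp
    · simp [hb z (Metric.ball_subset_ball (min_le_left _ _) hz)]
  · obtain ⟨k, G, hG, hG0, hFG⟩ := hFa.exists_eventuallyEq_pow_smul_nonzero_iff.2 h0
    have hc : ContinuousAt (fun z => ‖G z‖) 0 := hG.continuousAt.norm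
    have hg0 : 0 < ‖G 0‖ := norm_pos_iff.2 hG0
    set c := ‖G 0‖ / 2 with hcdef
    set C := ‖G 0‖ + 1 with hCdef
    have hc0 : 0 < c := by positivity
    have e1 : ∀ᶠ z in nhds (0:ℂ), c < ‖G z‖ := hc.eventually (lt_mem_nhds (by
      rw [hcdef]; linarith))
    have e2 : ∀ᶠ z in nhds (0:ℂ), ‖G z‖ < C := hc.eventually (gt_mem_nhds (by
      rw [hCdef]; linarith))
    obtain ⟨δ, hδ, hb⟩ := Metric.eventually_nhds_iff_ball.1 (hFG.and (e1.and e2))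
    set ρ := min δ (1 / 2) with hρdef
    have hρ0 : 0 < ρ := lt_min hδ (by norm_num)
    have hρ1 : ρ < 1 := (min_le_right _ _).trans_lt (by norm_num)
    have hFn : ∀ z ∈ Metric.ball (0:ℂ) ρ, c ^ 2 * ‖z‖ ^ (2 * k) ≤ ‖F z‖ ^ 2 ∧
        ‖F z‖ ^ 2 ≤ C ^ 2 * ‖z‖ ^ (2 * k) := by
      intro z hz
      obtain ⟨h1, h2, h3⟩ := hb z (Metric.ball_subset_ball (min_le_left _ _) hz)
      have : ‖F z‖ ^ 2 = ‖G z‖ ^ 2 * ‖z‖ ^ (2 * k) := by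
        rw [h1, sub_zero, norm_smul, norm_pow]; ring
      rw [this]
      constructor <;> gcongr
    have hL : ∫⁻ z in Metric.ball (0:ℂ) ρ,
        ENNReal.ofReal (‖z‖ ^ (2 * k)) * EReal.exp (-(φ z)) < ⊤ := by
      have h1 : ∫⁻ z in Metric.ball (0:ℂ) ρ,
          ENNReal.ofReal (‖z‖ ^ (2 * k)) * EReal.exp (-(φ z)) ≤ ∫⁻ z in Metric.ball (0:ℂ) ρ,
          ENNReal.ofReal ((c ^ 2)⁻¹) * (ENNReal.ofReal (‖F z‖ ^ 2) * EReal.exp (-(φ z))) := by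
        refine setLIntegral_mono' measurableSet_ball fun z hz => ?_
        rw [← mul_assoc, ← ENNReal.ofReal_mul (by positivity)]
        gcongr
        rw [le_inv_mul_iff₀ (by positivity)]
        exact (hFn z hz).1
      refine h1.trans_lt ?_
      rw [lintegral_const_mul' _ _ ENNReal.ofReal_ne_top]
      exact ENNReal.mul_lt_top ENNReal.ofReal_lt_top
        ((lintegral_mono_set (Metric.ball_subset_ball hρ1.le)).trans_lt hint)
    obtain ⟨r, hr0, hrρ, p, hp, hfin⟩ := SO.core hsub hneg hρ0 hρ1 k hL
    refine ⟨r, ⟨hr0, hrρ.trans_lt hρ1⟩, p, hp, ?_⟩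
    have h1 : ∫⁻ z in Metric.ball (0 : ℂ) r,
        ENNReal.ofReal (‖F z‖ ^ 2) * EReal.exp (-((p : EReal) * φ z)) ≤
        ∫⁻ z in Metric.ball (0 : ℂ) r, ENNReal.ofReal (C ^ 2) *
          (ENNReal.ofReal (‖z‖ ^ (2 * k)) * EReal.exp (-((p : EReal) * φ z))) := by
      refine setLIntegral_mono' measurableSet_ball fun z hz => ?_
      rw [← mul_assoc, ← ENNReal.ofReal_mul (by positivity)]
      gcongr
      exact (hFn z (Metric.ball_subset_ball hrρ hz)).2
    refine h1.trans_lt ?_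
    rw [lintegral_const_mul' _ _ ENNReal.ofReal_ne_top]
    exact ENNReal.mul_lt_top ENNReal.ofReal_lt_top hfin
end

section
/- One has liminf_{A → +∞} λ_n({x ∈ Ω : G(x) > A}) · u(A) = 0; that is, there exists a sequence A_j → +∞ with A_j > e such that λ_n({G > A_j}) / t_{A_j} → 0 as j → ∞. -/
open MeasureTheory Set Filter

/-- For `A > e`, `tA A` is the unique `y ∈ (0, e⁻¹)` with `y · (−log y) = 1/A`
(the set below is then a singleton, so its infimum is that unique element);
`u(A) := 1 / tA A`. -/
noncomputable def tA (A : ℝ) : ℝ :=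
  sInf {y : ℝ | y ∈ Set.Ioo 0 (Real.exp (-1)) ∧ y * (-Real.log y) = 1 / A}

lemma tA_lower (A : ℝ) (hA : Real.exp 1 < A) : 1 / (2 * A * Real.log A) ≤ tA A := by
  have hApos : 0 < A := (Real.exp_pos 1).trans hA
  have hlog : 1 < Real.log A := by
    rw [Real.lt_log_iff_exp_lt hApos]; exact hA
  have hA2 : 2 < A := by linarith [Real.add_one_le_exp (1:ℝ)]
  unfold tA
  apply le_csInf
  · have hinvlt : 1 / A < Real.exp (-1) := by
      rw [Real.exp_neg, ← one_div]
      exact one_div_lt_one_div_of_lt (Real.exp_pos 1) hA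
    have hle : (A ^ 2)⁻¹ ≤ Real.exp (-1) := by
      refine le_trans ?_ hinvlt.le
      rw [← one_div]
      exact one_div_le_one_div_of_le hApos (by nlinarith)
    have hcont : ContinuousOn (fun y : ℝ => y * (-Real.log y)) (Icc (A ^ 2)⁻¹ (Real.exp (-1))) := by
      have := Real.continuous_mul_log.neg.continuousOn (s := Icc (A ^ 2)⁻¹ (Real.exp (-1)))
      refine this.congr ?_
      intro y _
      simp
    have hmem : 1 / A ∈ Icc ((fun y : ℝ => y * (-Real.log y)) (A ^ 2)⁻¹)
        ((fun y : ℝ => y * (-Real.log y)) (Real.exp (-1))) := by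
      constructor
      · have h1 : 2 * Real.log A ≤ A := by
          have := Real.log_le_sub_one_of_pos (show 0 < A / 2 by positivity)
          rw [Real.log_div hApos.ne' (by norm_num)] at this
          linarith [Real.log_two_lt_d9]
        simp only [Real.log_inv, Real.log_pow, neg_neg]
        push_cast
        rw [inv_mul_le_iff₀ (by positivity)]
        have : A ^ 2 * (1 / A) = A := by field_simp
        rw [this]; exact h1
      · simp only [Real.log_exp]
        linarith
    obtain ⟨y, hy, hyeq⟩ := intermediate_value_Icc hle hcont hmem
    refine ⟨y, ⟨lt_of_lt_of_le (by positivity) hy.1, lt_of_le_of_ne hy.2 ?_⟩, hyeq⟩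
    rintro rfl
    simp only [Real.log_exp] at hyeq
    linarith
  · rintro y ⟨⟨hy0, hy1⟩, hy⟩
    have hs1 : 1 < -Real.log y := by
      have := Real.log_lt_log hy0 hy1
      rw [Real.log_exp] at this
      linarith
    set s := -Real.log y with hs
    have hyA : y = 1 / (A * s) := by
      have : s ≠ 0 := by positivity
      field_simp at hy ⊢
      linarith
    have h2 : Real.log y + Real.log s = - Real.log A := by
      rw [← Real.log_mul hy0.ne' (by positivity), hy, one_div, Real.log_inv]
    have h3 : Real.log s ≤ s / 2 := by
      have := Real.log_le_sub_one_of_pos (show 0 < s / 2 by positivity)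
      rw [Real.log_div (by positivity) (by norm_num)] at this
      linarith [Real.log_two_lt_d9]
    have h4 : s ≤ 2 * Real.log A := by linarith
    rw [hyA]
    apply one_div_le_one_div_of_le (by positivity)
    nlinarith

lemma dyadic_sum (g : ℝ) (hg : 0 < g) (N : ℕ) :
    ∑ k ∈ Finset.range N, (if (2:ℝ) ^ k < g then (2:ℝ) ^ k else 0) ≤ 2 * g ∧
    ∑ k ∈ Finset.range N, (if (2:ℝ) ^ k < g then (2:ℝ) ^ k else 0) ≤ 2 ^ N := by
  induction N with
  | zero => simp; linarith
  | succ N ih =>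
    rw [Finset.sum_range_succ, pow_succ]
    have : (0:ℝ) < 2 ^ N := by positivity
    split_ifs with h
    · constructor <;> linarith [ih.2]
    · constructor <;> linarith [ih.1, ih.2]

theorem stmt_10 {n : ℕ} (Ω : Set (Fin n → ℂ)) (hΩopen : IsOpen Ω) (hΩconn : IsConnected Ω)
    (hΩbdd : Bornology.IsBounded Ω) (hΩpos : 0 < volume Ω)
    (G : (Fin n → ℂ) → ℝ) (hGmeas : Measurable G) (hGpos : ∀ x ∈ Ω, 0 < G x)
    (hGint : IntegrableOn G Ω volume) :
    ∃ A : ℕ → ℝ, (∀ j, Real.exp 1 < A j) ∧ Tendsto A atTop atTop ∧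
      Tendsto (fun j => (volume {x | x ∈ Ω ∧ A j < G x}).toReal / tA (A j))
        atTop (nhds 0) := by
  have hΩfin : volume Ω < ⊤ := hΩbdd.measure_lt_top
  haveI : IsFiniteMeasure (volume.restrict Ω) := ⟨by simpa using hΩfin⟩
  set m : ℕ → ℝ := fun k => (volume {x | x ∈ Ω ∧ (2:ℝ) ^ k < G x}).toReal with hm
  have hSm : ∀ k : ℕ, MeasurableSet {x | (2:ℝ) ^ k < G x} :=
    fun k => measurableSet_lt measurable_const hGmeas
  have hint : ∀ k : ℕ, Integrable
      (fun x => if (2:ℝ) ^ k < G x then (2:ℝ) ^ k else 0) (volume.restrict Ω) := by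
    intro k
    exact (integrable_const ((2:ℝ) ^ k)).indicator (hSm k)
  have hval : ∀ k : ℕ, ∫ x in Ω, (if (2:ℝ) ^ k < G x then (2:ℝ) ^ k else 0) = 2 ^ k * m k := by
    intro k
    have h := integral_indicator_const (μ := volume.restrict Ω) ((2:ℝ) ^ k) (hSm k)
    have h' : (fun x => if (2:ℝ) ^ k < G x then (2:ℝ) ^ k else 0) =
      indicator {x | (2:ℝ) ^ k < G x} (fun _ => (2:ℝ) ^ k) := rfl
    rw [h', h, smul_eq_mul, mul_comm, Measure.real, Measure.restrict_apply (hSm k), inter_comm]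
    rfl
  have hsum : Summable (fun k => (2:ℝ) ^ k * m k) := by
    refine summable_of_sum_range_le (c := ∫ x in Ω, 2 * G x) ?_ ?_
    · intro k
      have : 0 ≤ m k := ENNReal.toReal_nonneg
      positivity
    · intro N
      simp_rw [← hval]
      rw [← integral_finsetSum _ (fun k _ => hint k)]
      refine setIntegral_mono_on (integrable_finsetSum _ (fun k _ => hint k))
        (hGint.const_mul 2) hΩopen.measurableSet ?_
      intro x hx
      exact (dyadic_sum (G x) (hGpos x hx) N).1
  have hfreq : ∀ j : ℕ, ∃ᶠ k : ℕ in atTop, (2 ≤ k ∧ k * (2 ^ k * m k) < 1 / ((j:ℝ) + 1)) := by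
    intro j hcon
    have hcon' : ∀ᶠ k : ℕ in atTop, 1 / (k:ℝ) ≤ (j + 1) * ((2:ℝ) ^ k * m k) := by
      filter_upwards [hcon, eventually_ge_atTop 2] with k hk h2
      have h3 : 1 / ((j:ℝ) + 1) ≤ k * (2 ^ k * m k) := by
        by_contra h
        exact hk ⟨h2, not_le.mp h⟩
      have hk0 : (0:ℝ) < k := by exact_mod_cast (by omega : 0 < k)
      rw [div_le_iff₀ (by positivity)] at h3 ⊢
      linarith
    refine Real.not_summable_one_div_natCast ?_
    refine Summable.of_norm_bounded_eventually_nat (hsum.mul_left ((j:ℝ) + 1)) ?_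
    filter_upwards [hcon'] with k hk
    rw [Real.norm_of_nonneg (by positivity)]
    exact hk
  obtain ⟨φ, hφ, hP⟩ := extraction_forall_of_frequently hfreq
  have hexp : ∀ k : ℕ, 2 ≤ k → Real.exp 1 < (2:ℝ) ^ k := by
    intro k hk
    have : (2:ℝ) ^ 2 ≤ 2 ^ k := pow_le_pow_right₀ (by norm_num) hk
    linarith [Real.exp_one_lt_d9]
  refine ⟨fun j => 2 ^ φ j, fun j => hexp _ (hP j).1,
    (tendsto_pow_atTop_atTop_of_one_lt (by norm_num)).comp hφ.tendsto_atTop, ?_⟩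
  have hlim : Tendsto (fun j : ℕ => 2 * (1 / ((j:ℝ) + 1))) atTop (nhds 0) := by
    simpa using (tendsto_one_div_add_atTop_nhds_zero_nat (𝕜 := ℝ)).const_mul 2
  have hpos : ∀ j, 0 < 1 / (2 * (2:ℝ) ^ φ j * Real.log (2 ^ φ j)) := by
    intro j
    have : 0 < Real.log ((2:ℝ) ^ φ j) :=
      Real.log_pos (one_lt_pow₀ (by norm_num) (by have := (hP j).1; omega))
    positivity
  refine squeeze_zero (fun j => ?_) (fun j => ?_) hlim
  · have := (hpos j).trans_le (tA_lower _ (hexp _ (hP j).1))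
    positivity
  · have h1 := tA_lower _ (hexp _ (hP j).1)
    have hm0 : 0 ≤ m (φ j) := ENNReal.toReal_nonneg
    calc (volume {x | x ∈ Ω ∧ (2:ℝ) ^ φ j < G x}).toReal / tA (2 ^ φ j)
        ≤ m (φ j) / (1 / (2 * (2:ℝ) ^ φ j * Real.log (2 ^ φ j))) :=
          div_le_div_of_nonneg_left hm0 (hpos j) h1
      _ = (2 * (φ j * (2 ^ φ j * m (φ j)))) * Real.log 2 := by
          rw [Real.log_pow, div_div_eq_mul_div]; ring
      _ ≤ (2 * (φ j * (2 ^ φ j * m (φ j)))) * 1 := by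
          apply mul_le_mul_of_nonneg_left _ (by positivity)
          linarith [Real.log_two_lt_d9]
      _ ≤ 2 * (1 / ((j:ℝ) + 1)) := by linarith [(hP j).2]
end

section
/- Let t_j ∈ (0, e^{−1}) be a sequence with t_j → 0 and let x_j > e be a sequence of reals such that x_j · t_j · (−log t_j) → 0 as j → ∞. Then u(x_j) = o(t_j^{−1}), i.e., t_j · u(x_j) = t_j / t_{x_j} → 0 as j → ∞. -/
open MeasureTheory Set Filter

lemma negMulLog_strictMono : StrictMonoOn Real.negMulLog (Set.Icc 0 (Real.exp (-1))) := by
  apply strictMonoOn_of_deriv_pos (convex_Icc _ _) Real.continuous_negMulLog.continuousOn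
  intro y hy
  rw [interior_Icc] at hy
  rw [Real.deriv_negMulLog hy.1.ne']
  have := (Real.log_lt_iff_lt_exp hy.1).2 hy.2
  linarith

lemma tA_spec {A : ℝ} (hA : Real.exp 1 < A) :
    tA A ∈ Set.Ioo 0 (Real.exp (-1)) ∧ Real.negMulLog (tA A) = 1 / A := by
  have hA0 : 0 < A := (Real.exp_pos 1).trans hA
  have h1 : 1 / A < Real.exp (-1) := by
    rw [Real.exp_neg, ← one_div]
    exact one_div_lt_one_div_of_lt (Real.exp_pos 1) hA
  have h0 : 0 < 1 / A := by positivity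
  have hivt := intermediate_value_Ioo (Real.exp_pos (-1)).le
    (Real.continuous_negMulLog.continuousOn (s := Set.Icc 0 (Real.exp (-1))))
  have hmem : 1 / A ∈ Set.Ioo (Real.negMulLog 0) (Real.negMulLog (Real.exp (-1))) := by
    simp only [Real.negMulLog, Real.log_exp]
    constructor
    · simpa using hA0
    · linarith
  obtain ⟨y, hy, hyA⟩ := hivt hmem
  have hset : {y : ℝ | y ∈ Set.Ioo 0 (Real.exp (-1)) ∧ y * (-Real.log y) = 1 / A} = {y} := by
    ext z
    simp only [Set.mem_setOf_eq, Set.mem_singleton_iff]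
    constructor
    · rintro ⟨hz, hzA⟩
      apply negMulLog_strictMono.injOn (Set.Ioo_subset_Icc_self hz) (Set.Ioo_subset_Icc_self hy)
      rw [hyA, ← hzA, Real.negMulLog]
      ring
    · rintro rfl
      refine ⟨hy, ?_⟩
      rw [← hyA, Real.negMulLog]
      ring
  have : tA A = y := by rw [tA, hset, csInf_singleton]
  rw [this]
  exact ⟨hy, hyA⟩

/-- If `t_j ∈ (0, e⁻¹)`, `t_j → 0`, `x_j > e` and `x_j · t_j · (−log t_j) → 0`,
then `u(x_j) = o(t_j⁻¹)`, i.e. `t_j · u(x_j) = t_j / t_{x_j} → 0`. -/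
theorem stmt_12 (t x : ℕ → ℝ)
    (ht : ∀ j, t j ∈ Set.Ioo 0 (Real.exp (-1)))
    (ht0 : Tendsto t atTop (nhds 0))
    (hx : ∀ j, Real.exp 1 < x j)
    (hxt : Tendsto (fun j => x j * t j * (-Real.log (t j))) atTop (nhds 0)) :
    Tendsto (fun j => t j / tA (x j)) atTop (nhds 0) := by
  have hev : ∀ᶠ j in atTop, x j * t j * (-Real.log (t j)) < 1 :=
    hxt.eventually (gt_mem_nhds one_pos)
  refine tendsto_of_tendsto_of_tendsto_of_le_of_le' tendsto_const_nhds hxt ?_ ?_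
  · exact Eventually.of_forall fun j => div_nonneg (ht j).1.le (tA_spec (hx j)).1.1.le
  · filter_upwards [hev] with j hj
    obtain ⟨hs, hsA⟩ := tA_spec (hx j)
    have hx0 : 0 < x j := (Real.exp_pos 1).trans (hx j)
    have htj := ht j
    have hlt : t j < tA (x j) := by
      rw [← negMulLog_strictMono.lt_iff_lt (Set.Ioo_subset_Icc_self htj)
        (Set.Ioo_subset_Icc_self hs), hsA, lt_div_iff₀ hx0, Real.negMulLog]
      linarith
    have hlog : Real.log (t j) ≤ Real.log (tA (x j)) := Real.log_le_log htj.1 hlt.le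
    have hxs : x j * (-Real.log (tA (x j))) = 1 / tA (x j) := by
      have hsne := hs.1.ne'
      rw [Real.negMulLog, eq_div_iff hx0.ne'] at hsA
      rw [eq_div_iff hsne]
      linarith
    calc t j / tA (x j) = t j * (x j * (-Real.log (tA (x j)))) := by rw [hxs]; ring
      _ ≤ t j * (x j * (-Real.log (t j))) := by
        apply mul_le_mul_of_nonneg_left _ htj.1.le
        apply mul_le_mul_of_nonneg_left _ hx0.le
        linarith
      _ = _ := by ring
end

section
/- Let r > 0, let i₁ ≥ 1 be an integer, and let h be a holomorphic function on Δ_r with h not identically zero. Then there exist constants C₂ > 0 and δ ∈ (0, r) such that: for every a ∈ ℂ with 0 < |a| < δ and |a| < r^{i₁}, and every holomorphic function f on Δ_r satisfying f(0) = 0 and f(b) = 1 for every b ∈ ℂ with b^{i₁} = a, one has i₁² ∫_{Δ_r} |f(t)|² |h(t)|² |t|^{2(i₁−1)} dλ₁(t) > C₂ |a|^{−2}. The constants C₂ and δ depend only on h, r and i₁, not on a or f. -/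
open MeasureTheory Set Filter ENNReal

lemma aux_multiset (f : ℂ → ℂ) (ρ : ℝ) (hρ : 0 < ρ)
    (hf : DifferentiableOn ℂ f (Metric.closedBall 0 ρ)) (s : Multiset ℂ)
    (hs : ∀ z ∈ s, z ∈ Metric.ball (0 : ℂ) ρ) :
    CircleIntegrable (fun t => (s.map (fun z => 1 / (t - z))).sum * f t) 0 ρ ∧
    (∮ t in C(0, ρ), (s.map (fun z => 1 / (t - z))).sum * f t)
      = 2 * Real.pi * Complex.I * (s.map f).sum := by
  induction s using Multiset.induction_on with
  | empty => simp [circleIntegral]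
  | cons z s ih =>
    obtain ⟨h1, h2⟩ := ih (fun w hw => hs w (Multiset.mem_cons_of_mem hw))
    have hz := hs z (Multiset.mem_cons_self z s)
    have h3 : CircleIntegrable (fun t => 1 / (t - z) * f t) 0 ρ := by
      apply ContinuousOn.circleIntegrable hρ.le
      apply ContinuousOn.mul
      · apply ContinuousOn.div continuousOn_const (by fun_prop)
        intro t ht h0
        rw [sub_eq_zero] at h0
        subst h0
        simp at ht hz
        linarith
      · exact hf.continuousOn.mono Metric.sphere_subset_closedBall
    have h4 := hf.circleIntegral_sub_inv_smul hz
    simp only [smul_eq_mul] at h4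
    simp only [Multiset.map_cons, Multiset.sum_cons, add_mul]
    refine ⟨h3.add h1, ?_⟩
    rw [circleIntegral.integral_add h3 h1, h2, mul_add, ← h4]
    simp

lemma aux_mean (f : ℂ → ℂ) (ρ : ℝ) (hρ : 0 < ρ) (i : ℕ) (hi : 1 ≤ i)
    (hf : DifferentiableOn ℂ f (Metric.closedBall 0 ρ)) (a : ℂ) (ha : ‖a‖ < ρ ^ i)
    (f0 : f 0 = 0) (hb : ∀ b : ℂ, b ^ i = a → f b = 1) :
    2 * Real.pi * (ρ ^ i - ‖a‖) ≤ ‖a‖ * ∫ θ in (0:ℝ)..(2 * Real.pi), ‖f (circleMap 0 ρ θ)‖ := by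
  have hi0 : i ≠ 0 := by omega
  set p : Polynomial ℂ := Polynomial.X ^ i - Polynomial.C a with hp
  have hp0 : p ≠ 0 := Polynomial.X_pow_sub_C_ne_zero (by omega) a
  have hroot : ∀ z ∈ p.roots, z ^ i = a := by
    intro z hz
    rw [Polynomial.mem_roots hp0] at hz
    simpa [hp, Polynomial.IsRoot, sub_eq_zero] using hz
  have hcard : p.roots.card = i := by
    rw [← (IsAlgClosed.splits p).natDegree_eq_card_roots, hp, Polynomial.natDegree_X_pow_sub_C]
  obtain ⟨h1, h2⟩ := aux_multiset f ρ hρ hf p.roots (by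
    intro z hz
    have := hroot z hz
    rw [← this, norm_pow] at ha
    simpa using lt_of_pow_lt_pow_left₀ i hρ.le ha)
  obtain ⟨h3, h4⟩ := aux_multiset f ρ hρ hf {0} (by simpa using hρ)
  have h5 : (p.roots.map f).sum = i := by
    rw [Multiset.map_congr rfl (fun z hz => hb z (hroot z hz))]
    simp [hcard]
  have hnz : ∀ t : ℂ, ‖t‖ = ρ → ρ ^ i - ‖a‖ ≤ ‖t ^ i - a‖ := by
    intro t ht
    have := norm_sub_norm_le (t ^ i) a
    rwa [norm_pow, ht] at this
  have h6 : (∮ t in C(0, ρ), (i : ℂ) * (a / (t * (t ^ i - a)) * f t))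
      = 2 * Real.pi * Complex.I * i := by
    have e1 : 2 * Real.pi * Complex.I * i = (2 * Real.pi * Complex.I * i : ℂ) - i * 0 := by ring
    have e2 : (∮ t in C(0, ρ), (i : ℂ) * (1 / t * f t)) = i * 0 := by
      rw [circleIntegral.integral_const_mul]
      congr 1
      simpa [f0] using h4
    have h3' : CircleIntegrable (fun t => (i : ℂ) * (1 / t * f t)) 0 ρ := by
      have := h3.const_smul (a := (i : ℂ))
      have e : (fun t => (i : ℂ) * (1 / t * f t)) = ((i : ℂ) •
          fun t => (Multiset.map (fun z => 1 / (t - z)) {0}).sum * f t) := by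
        funext t
        simp
      rw [e]
      exact this
    rw [h5] at h2
    rw [e1, ← e2, ← h2, ← circleIntegral.integral_sub h1 h3']
    apply circleIntegral.integral_congr hρ.le
    intro t ht
    have ht' : ‖t‖ = ρ := by simpa using ht
    have ht0 : t ≠ 0 := by
      rintro rfl
      simp at ht'
      linarith
    have hta : t ^ i - a ≠ 0 := by
      intro h0
      have := hnz t ht'
      rw [h0, norm_zero] at this
      linarith
    have hev : p.eval t = t ^ i - a := by simp [hp]
    have := (IsAlgClosed.splits p).eval_derivative_div_eval_of_ne_zero (x := t) (by rwa [hev])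
    simp only
    rw [← this, hev]
    have hd : p.derivative.eval t = i * t ^ (i - 1) := by
      simp [hp, Polynomial.derivative_X_pow]
    rw [hd]
    obtain ⟨k, rfl⟩ : ∃ k, i = k + 1 := ⟨i - 1, by omega⟩
    simp only [Nat.add_sub_cancel]
    field_simp
    ring
  rw [circleIntegral.integral_const_mul, mul_comm] at h6
  have h7 := mul_right_cancel₀ (Nat.cast_ne_zero.2 hi0) h6
  have h8 : 2 * Real.pi = ‖∮ t in C(0, ρ), (a / (t * (t ^ i - a)) * f t)‖ := by
    rw [h7]; simp [abs_of_pos Real.pi_pos]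
  have hpos : 0 < ρ ^ i - ‖a‖ := by linarith
  have hcont : Continuous fun θ => ‖f (circleMap 0 ρ θ)‖ := by
    refine (hf.continuousOn.comp_continuous (continuous_circleMap 0 ρ) ?_).norm
    intro θ
    simp [abs_of_pos hρ]
  have h9 : 2 * Real.pi ≤ ∫ θ in (0:ℝ)..(2 * Real.pi),
      ‖a‖ / (ρ ^ i - ‖a‖) * ‖f (circleMap 0 ρ θ)‖ := by
    refine h8.le.trans ?_
    rw [circleIntegral]
    apply intervalIntegral.norm_integral_le_of_norm_le (by positivity)
    · refine Eventually.of_forall fun θ _ => ?_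
      have hn : ‖circleMap 0 ρ θ‖ = ρ := by simp [abs_of_pos hρ]
      have := hnz _ hn
      have h0 : 0 < ‖circleMap 0 ρ θ ^ i - a‖ := by linarith
      simp only [deriv_circleMap, smul_eq_mul, norm_mul, norm_div, hn, Complex.norm_I, mul_one]
      have e : ρ * (‖a‖ / (ρ * ‖circleMap 0 ρ θ ^ i - a‖) * ‖f (circleMap 0 ρ θ)‖)
        = ‖a‖ / ‖circleMap 0 ρ θ ^ i - a‖ * ‖f (circleMap 0 ρ θ)‖ := by
        field_simp
      rw [e]
      gcongr
    · exact (hcont.const_mul _).intervalIntegrable _ _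
  rw [intervalIntegral.integral_const_mul] at h9
  rw [div_mul_eq_mul_div, le_div_iff₀ hpos] at h9
  exact h9

lemma aux_L2 (f : ℂ → ℂ) (ρ : ℝ) (hρ : 0 < ρ) (i : ℕ) (hi : 1 ≤ i)
    (hf : DifferentiableOn ℂ f (Metric.closedBall 0 ρ)) (a : ℂ) (ha0 : 0 < ‖a‖)
    (f0 : f 0 = 0) (hb : ∀ b : ℂ, b ^ i = a → f b = 1) (K : ℝ) (hK : 0 < K)
    (hKa : K * ‖a‖ ≤ ρ ^ i - ‖a‖) :
    ENNReal.ofReal (2 * Real.pi * K ^ 2) ≤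
      ∫⁻ θ in Ioo (-Real.pi) Real.pi, ENNReal.ofReal (‖f (circleMap 0 ρ θ)‖ ^ 2) := by
  have hKp : 0 < K * ‖a‖ := by positivity
  have h := aux_mean f ρ hρ i hi hf a (by linarith) f0 hb
  have hpi := Real.pi_pos
  have hcont : Continuous fun θ => ‖f (circleMap 0 ρ θ)‖ := by
    refine (hf.continuousOn.comp_continuous (continuous_circleMap 0 ρ) ?_).norm
    intro θ
    simp [abs_of_pos hρ]
  have hper : Function.Periodic (fun θ => ‖f (circleMap 0 ρ θ)‖) (2 * Real.pi) := by
    intro θ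
    simp only [periodic_circleMap 0 ρ θ]
  have h1 := hper.intervalIntegral_add_eq 0 (-Real.pi)
  rw [zero_add, show -Real.pi + 2 * Real.pi = Real.pi by ring] at h1
  rw [h1] at h
  set J := ∫ θ in (-Real.pi)..Real.pi, ‖f (circleMap 0 ρ θ)‖ with hJ
  have hJK : 2 * Real.pi * K ≤ J := by
    have : 2 * Real.pi * K * ‖a‖ ≤ J * ‖a‖ := by nlinarith
    exact le_of_mul_le_mul_right this ha0
  have h2 : (∫ θ in (-Real.pi)..Real.pi, (2 * K * ‖f (circleMap 0 ρ θ)‖ - K ^ 2))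
      ≤ ∫ θ in (-Real.pi)..Real.pi, ‖f (circleMap 0 ρ θ)‖ ^ 2 := by
    apply intervalIntegral.integral_mono_on (by linarith)
    · exact ((hcont.const_mul _).sub continuous_const).intervalIntegrable _ _
    · exact (hcont.pow 2).intervalIntegrable _ _
    · intro θ _
      nlinarith [sq_nonneg (‖f (circleMap 0 ρ θ)‖ - K)]
  rw [intervalIntegral.integral_sub ((hcont.const_mul _).intervalIntegrable _ _)
    (continuous_const.intervalIntegrable _ _), intervalIntegral.integral_const_mul,
    intervalIntegral.integral_const, ← hJ, smul_eq_mul] at h2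
  have h3 : 2 * Real.pi * K ^ 2 ≤ ∫ θ in (-Real.pi)..Real.pi, ‖f (circleMap 0 ρ θ)‖ ^ 2 := by
    nlinarith
  rw [intervalIntegral.integral_of_le (by linarith), integral_Ioc_eq_integral_Ioo] at h3
  rw [← ofReal_integral_eq_lintegral_ofReal]
  · exact ENNReal.ofReal_le_ofReal h3
  · exact ((hcont.pow 2).integrableOn_Icc).mono_set Ioo_subset_Icc_self
  · exact Eventually.of_forall fun θ => by positivity

lemma aux_h (r : ℝ) (hr : 0 < r) (h : ℂ → ℂ)
    (hhol : DifferentiableOn ℂ h (Metric.ball 0 r))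
    (hne : ∃ z ∈ Metric.ball (0 : ℂ) r, h z ≠ 0) :
    ∃ ρ₁ ρ₂ c : ℝ, 0 < ρ₁ ∧ ρ₁ < ρ₂ ∧ ρ₂ < r ∧ 0 < c ∧
      ∀ t : ℂ, ρ₁ ≤ ‖t‖ → ‖t‖ ≤ ρ₂ → c ≤ ‖h t‖ := by
  have han : AnalyticOnNhd ℂ h (Metric.ball 0 r) := hhol.analyticOnNhd Metric.isOpen_ball
  have h0 : (0 : ℂ) ∈ Metric.ball (0 : ℂ) r := by simpa using hr
  rcases (han 0 h0).eventually_eq_zero_or_eventually_ne_zero with hz | hz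
  · obtain ⟨z, hzr, hz'⟩ := hne
    exact absurd (han.eqOn_zero_of_preconnected_of_eventuallyEq_zero
      (convex_ball 0 r).isPreconnected h0 hz hzr) hz'
  · rw [eventually_nhdsWithin_iff, Metric.eventually_nhds_iff] at hz
    obtain ⟨ε, hε, hz⟩ := hz
    set m := min ε r
    have hm : 0 < m := lt_min hε hr
    have hmε : m ≤ ε := min_le_left _ _
    have hmr : m ≤ r := min_le_right _ _
    have hcpt : IsCompact (Metric.closedBall (0 : ℂ) (m / 2) ∩ {t | m / 4 ≤ ‖t‖}) :=
      (isCompact_closedBall _ _).inter_right (isClosed_le continuous_const continuous_norm)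
    obtain ⟨c, hc, hcc⟩ := hcpt.exists_forall_le' (f := fun t => ‖h t‖) (a := 0)
      ((hhol.continuousOn.mono (by
        rintro t ⟨ht, _⟩
        simp at ht ⊢
        linarith)).norm) (by
        rintro t ⟨ht, ht2⟩
        simp only [Metric.mem_closedBall, dist_zero_right, mem_ofPred_eq] at ht ht2
        refine norm_pos_iff.2 (hz (by rw [dist_zero_right]; linarith) ?_)
        rintro rfl
        simp at ht2
        linarith)
    refine ⟨m / 4, m / 2, c, by linarith, by linarith, by linarith, hc, fun t h1 h2 => ?_⟩
    exact hcc t ⟨by simpa using h2, h1⟩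

lemma aux_polar (G : ℂ → ℝ≥0∞) (hG : Measurable G) (ρ₁ ρ₂ : ℝ) (h1 : 0 < ρ₁)
    (B : ℝ≥0∞)
    (hB : ∀ ρ ∈ Ioo ρ₁ ρ₂, B ≤ ∫⁻ θ in Ioo (-Real.pi) Real.pi, G (circleMap 0 ρ θ)) :
    ENNReal.ofReal (ρ₂ - ρ₁) * (ENNReal.ofReal ρ₁ * B) ≤ ∫⁻ t, G t := by
  rw [← Complex.lintegral_comp_polarCoord_symm]
  have hsub : Ioo ρ₁ ρ₂ ×ˢ Ioo (-Real.pi) Real.pi ⊆ polarCoord.target := by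
    rintro ⟨x, y⟩ ⟨hx, hy⟩
    exact ⟨lt_trans h1 hx.1, hy⟩
  refine le_trans ?_ (lintegral_mono_set hsub)
  have heq : ∀ p : ℝ × ℝ, Complex.polarCoord.symm p = circleMap 0 p.1 p.2 := by
    intro p
    rw [Complex.polarCoord_symm_apply, circleMap, Complex.exp_mul_I]
    simp
  simp only [heq, smul_eq_mul]
  have hm : Measurable fun p : ℝ × ℝ => circleMap 0 p.1 p.2 := by
    unfold circleMap
    fun_prop
  rw [Measure.volume_eq_prod, ← Measure.prod_restrict, lintegral_prod _ (by fun_prop)]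
  calc ENNReal.ofReal (ρ₂ - ρ₁) * (ENNReal.ofReal ρ₁ * B)
      = ∫⁻ ρ in Ioo ρ₁ ρ₂, ENNReal.ofReal ρ₁ * B := by
        rw [setLIntegral_const, Real.volume_Ioo, mul_comm]
    _ ≤ _ := by
        apply setLIntegral_mono' measurableSet_Ioo
        intro ρ hρ
        simp only
        rw [lintegral_const_mul']
        · gcongr
          · exact hρ.1.le
          · exact hB ρ hρ
        · simp

/-- Normalized-coordinate estimate on a singular curve: for `h` holomorphic, not
identically zero on `Δ_r`, and `i₁ ≥ 1`, there are `C₂ > 0`, `δ ∈ (0, r)` such that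
every holomorphic `f` on `Δ_r` with `f 0 = 0` and `f b = 1` for all `i₁`-th roots
`b` of `a` (where `0 < |a| < δ`, `|a| < r^{i₁}`) satisfies
`i₁² ∫_{Δ_r} |f|²|h|²|t|^{2(i₁−1)} > C₂ |a|⁻²`. -/
theorem stmt_16 (r : ℝ) (hr : 0 < r) (i₁ : ℕ) (hi₁ : 1 ≤ i₁) (h : ℂ → ℂ)
    (hhol : DifferentiableOn ℂ h (Metric.ball 0 r))
    (hne : ∃ z ∈ Metric.ball (0 : ℂ) r, h z ≠ 0) :
    ∃ C₂ > (0 : ℝ), ∃ δ ∈ Set.Ioo (0 : ℝ) r,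
      ∀ a : ℂ, 0 < ‖a‖ → ‖a‖ < δ → ‖a‖ < r ^ i₁ →
        ∀ f : ℂ → ℂ, DifferentiableOn ℂ f (Metric.ball 0 r) → f 0 = 0 →
          (∀ b : ℂ, b ^ i₁ = a → f b = 1) →
          ENNReal.ofReal (C₂ * (‖a‖ ^ 2)⁻¹) <
            ((i₁ : ℝ≥0∞) ^ 2) * ∫⁻ t in Metric.ball (0 : ℂ) r,
              ENNReal.ofReal (‖f t‖ ^ 2 * ‖h t‖ ^ 2 * ‖t‖ ^ (2 * (i₁ - 1))) := by
  obtain ⟨ρ₁, ρ₂, c, h1, h12, h2r, hc, hh⟩ := aux_h r hr h hhol hne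
  have hpi := Real.pi_pos
  have hd : 0 < ρ₂ - ρ₁ := by linarith
  set D : ℝ := c ^ 2 * ρ₁ ^ (2 * (i₁ - 1)) with hD
  have hDpos : 0 < D := by positivity
  set Q : ℝ := D * ((ρ₂ - ρ₁) * (ρ₁ * (2 * Real.pi * (ρ₁ ^ i₁ / 2) ^ 2))) with hQ
  have hQpos : 0 < Q := by positivity
  have hρi : 0 < ρ₁ ^ i₁ := by positivity
  refine ⟨Q / 2, by positivity, min (ρ₁ ^ i₁ / 2) (r / 2),
    ⟨lt_min (by positivity) (by positivity), lt_of_le_of_lt (min_le_right _ _) (by linarith)⟩, ?_⟩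
  intro a ha0 had _ f hf f0 hb
  have had' : ‖a‖ < ρ₁ ^ i₁ / 2 := lt_of_lt_of_le had (min_le_left _ _)
  set K : ℝ := ρ₁ ^ i₁ / 2 / ‖a‖ with hK
  have hKpos : 0 < K := by positivity
  have hKa : K * ‖a‖ = ρ₁ ^ i₁ / 2 := by rw [hK]; field_simp
  -- the annulus
  set A : Set ℂ := {t | ρ₁ < ‖t‖} ∩ {t | ‖t‖ < ρ₂} with hA
  have hAo : IsOpen A :=
    (isOpen_lt continuous_const continuous_norm).inter (isOpen_lt continuous_norm continuous_const)
  have hAsub : A ⊆ Metric.ball (0 : ℂ) r := by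
    rintro t ⟨_, ht⟩
    simp only [mem_ofPred_eq] at ht
    simp
    linarith
  set G : ℂ → ℝ≥0∞ := A.indicator (fun t => ENNReal.ofReal (‖f t‖ ^ 2)) with hG
  have hGm : Measurable G := by
    classical
    rw [hG, ← piecewise_eq_indicator]
    refine ContinuousOn.measurable_piecewise ?_ continuousOn_const hAo.measurableSet
    exact ENNReal.continuous_ofReal.comp_continuousOn ((hf.continuousOn.mono hAsub).norm.pow 2)
  have hpolar := aux_polar G hGm ρ₁ ρ₂ h1 (ENNReal.ofReal (2 * Real.pi * K ^ 2)) (by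
    intro ρ hρ
    have hρ0 : 0 < ρ := h1.trans hρ.1
    have hpow : ρ₁ ^ i₁ ≤ ρ ^ i₁ := pow_le_pow_left₀ h1.le hρ.1.le _
    have := aux_L2 f ρ hρ0 i₁ hi₁ (hf.mono (Metric.closedBall_subset_ball (hρ.2.trans h2r))) a ha0
      f0 hb K hKpos (by rw [hKa]; linarith)
    refine this.trans (le_of_eq ?_)
    refine lintegral_congr fun θ => ?_
    rw [hG, indicator_of_mem]
    simpa [hA, abs_of_pos hρ0] using hρ)
  have hint : ENNReal.ofReal D * ∫⁻ t, G t ≤ ∫⁻ t in Metric.ball (0 : ℂ) r,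
      ENNReal.ofReal (‖f t‖ ^ 2 * ‖h t‖ ^ 2 * ‖t‖ ^ (2 * (i₁ - 1))) := by
    refine le_trans ?_ (lintegral_mono_set hAsub)
    rw [hG, lintegral_indicator hAo.measurableSet, ← lintegral_const_mul' _ _ (by simp)]
    apply setLIntegral_mono' hAo.measurableSet
    rintro t ⟨ht1, ht2⟩
    simp only [mem_ofPred_eq] at ht1 ht2
    rw [← ENNReal.ofReal_mul hDpos.le]
    apply ENNReal.ofReal_le_ofReal
    have hct := hh t ht1.le ht2.le
    calc D * ‖f t‖ ^ 2 = ‖f t‖ ^ 2 * c ^ 2 * ρ₁ ^ (2 * (i₁ - 1)) := by rw [hD]; ring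
      _ ≤ _ := by gcongr
  have hfin : ENNReal.ofReal (Q * (‖a‖ ^ 2)⁻¹) ≤ ENNReal.ofReal D * ∫⁻ t, G t := by
    refine le_trans (le_of_eq ?_) (mul_le_mul_right hpolar (ENNReal.ofReal D))
    rw [← ENNReal.ofReal_mul h1.le, ← ENNReal.ofReal_mul hd.le, ← ENNReal.ofReal_mul hDpos.le]
    congr 1
    rw [hQ, hK]
    field_simp
  have hlt : ENNReal.ofReal (Q / 2 * (‖a‖ ^ 2)⁻¹) < ENNReal.ofReal (Q * (‖a‖ ^ 2)⁻¹) := by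
    rw [ENNReal.ofReal_lt_ofReal_iff (by positivity)]
    gcongr
    linarith
  refine lt_of_lt_of_le hlt (hfin.trans (hint.trans ?_))
  apply le_mul_of_one_le_left (zero_le)
  exact one_le_pow₀ (by exact_mod_cast hi₁)
end

section
/- Let n ≥ 2, let r ∈ (0,1], let i₁ ≥ 1 be an integer, and let g₂, …, g_n be holomorphic functions on Δ_r with |g_l(t)| ≤ 1/6 for all t ∈ Δ_r and all l = 2, …, n. Then for every holomorphic function F on the unit polydisc Δⁿ ⊂ ℂⁿ, ∫_{Δⁿ} |F|² dλ_n ≥ (π/3)^{n−1} · i₁ · ∫_{Δ_r} |F(t^{i₁}, g₂(t), …, g_n(t))|² |t|^{2(i₁−1)} dλ₁(t). -/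
open MeasureTheory Set Filter ENNReal

lemma aux_circle (h : ℂ → ℂ) (a : ℂ) (R : ℝ) (hR : 0 < R)
    (hh : DifferentiableOn ℂ h (Metric.closedBall a R)) :
    ENNReal.ofReal (2 * Real.pi) * ‖h a‖ₑ ≤
      ∫⁻ θ in Ioo (-Real.pi) Real.pi, ‖h (circleMap a R θ)‖ₑ := by
  have h1 : Real.circleAverage h a R = h a := by
    apply DiffContOnCl.circleAverage
    rw [abs_of_pos hR]
    apply DifferentiableOn.diffContOnCl
    rwa [closure_ball _ hR.ne']
  have hper : Function.Periodic (fun θ => h (circleMap a R θ)) (2 * Real.pi) := fun θ => by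
    simp only [periodic_circleMap a R θ]
  have h2 := hper.intervalIntegral_add_eq 0 (-Real.pi)
  rw [Real.circleAverage_def] at h1
  have e : -Real.pi + 2 * Real.pi = Real.pi := by ring
  rw [zero_add, e] at h2
  rw [h2, intervalIntegral.integral_of_le (by linarith [Real.pi_pos]),
    integral_Ioc_eq_integral_Ioo] at h1
  have h3 : ‖(2 * Real.pi)⁻¹‖ₑ * ‖∫ θ in Ioo (-Real.pi) Real.pi, h (circleMap a R θ)‖ₑ = ‖h a‖ₑ := by
    rw [← enorm_smul, h1]
  have hp : 0 < 2 * Real.pi := by positivity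
  rw [← h3, ← mul_assoc, Real.enorm_of_nonneg (by positivity), ← ENNReal.ofReal_mul (by positivity),
    mul_inv_cancel₀ hp.ne', ENNReal.ofReal_one, one_mul]
  exact enorm_integral_le_lintegral_enorm _

lemma aux_disc (h : ℂ → ℂ) (hh : DifferentiableOn ℂ h (Metric.ball 0 1)) (a : ℂ)
    (ha : ‖a‖ ≤ 1 / 6) :
    ENNReal.ofReal (Real.pi / 3) * ‖h a‖ₑ ≤ ∫⁻ z in Metric.ball (0 : ℂ) 1, ‖h z‖ₑ := by
  classical
  have hm : Measurable ((Metric.ball (0:ℂ) 1).indicator h) := by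
    rw [← Set.piecewise_eq_indicator]
    exact ContinuousOn.measurable_piecewise hh.continuousOn continuousOn_const
      Metric.isOpen_ball.measurableSet
  set H := (Metric.ball (0:ℂ) 1).indicator h with hH
  have e1 : ∫⁻ z in Metric.ball (0 : ℂ) 1, ‖h z‖ₑ = ∫⁻ z, ‖H (a + z)‖ₑ := by
    rw [lintegral_add_left_eq_self (fun z => ‖H z‖ₑ) a,
      ← lintegral_indicator Metric.isOpen_ball.measurableSet]
    congr 1 with z
    by_cases hz : z ∈ Metric.ball (0:ℂ) 1 <;> simp [hH, hz]
  have hpm : Measurable (fun p : ℝ × ℝ => Complex.polarCoord.symm p) := by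
    simp only [Complex.polarCoord_symm_apply]
    fun_prop
  have hsub : ∀ R : ℝ, 0 < R → R < 5 / 6 → Metric.closedBall a R ⊆ Metric.ball (0:ℂ) 1 := by
    intro R h0 h1 z hz
    rw [mem_closedBall_iff_norm] at hz
    rw [mem_ball_zero_iff]
    have := norm_add_le (z - a) a
    rw [sub_add_cancel] at this
    linarith
  rw [e1, ← Complex.lintegral_comp_polarCoord_symm, polarCoord_target,
    Measure.volume_eq_prod, ← Measure.prod_restrict, lintegral_prod]
  · calc ENNReal.ofReal (Real.pi / 3) * ‖h a‖ₑ
        ≤ ENNReal.ofReal (Real.pi * (25 / 36)) * ‖h a‖ₑ := by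
          gcongr
          nlinarith [Real.pi_pos]
      _ = ∫⁻ R in Ioo (0:ℝ) (5/6), ENNReal.ofReal R * (ENNReal.ofReal (2 * Real.pi) * ‖h a‖ₑ) := by
          rw [lintegral_mul_const _ (by fun_prop), ← mul_assoc]
          congr 1
          rw [← ofReal_integral_eq_lintegral_ofReal, ← ENNReal.ofReal_mul]
          · congr 1
            rw [← integral_Ioc_eq_integral_Ioo, ← intervalIntegral.integral_of_le (by norm_num)]
            simp only [integral_id]
            ring
          · exact setIntegral_nonneg measurableSet_Ioo (fun x hx => hx.1.le)
          · exact (continuous_id.integrableOn_Icc (a := (0:ℝ)) (b := 5/6)).mono_set Ioo_subset_Icc_self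
          · exact (ae_restrict_iff' measurableSet_Ioo).2 (Eventually.of_forall fun x hx => hx.1.le)
      _ ≤ ∫⁻ R in Ioo (0:ℝ) (5/6), ∫⁻ θ in Ioo (-Real.pi) Real.pi,
            ENNReal.ofReal R • ‖H (a + Complex.polarCoord.symm (R, θ))‖ₑ := by
          refine setLIntegral_mono' measurableSet_Ioo fun R hR => ?_
          simp only [smul_eq_mul]
          rw [lintegral_const_mul _ (by fun_prop)]
          gcongr
          refine (aux_circle h a R hR.1 (hh.mono (hsub R hR.1 hR.2))).trans (le_of_eq ?_)
          refine lintegral_congr fun θ => ?_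
          have : a + Complex.polarCoord.symm (R, θ) = circleMap a R θ := by
            rw [Complex.polarCoord_symm_apply, circleMap, Complex.exp_mul_I]
            simp
          rw [this, hH, indicator_of_mem]
          exact hsub R hR.1 hR.2 (circleMap_mem_closedBall a hR.1.le θ)
      _ ≤ _ := lintegral_mono_set Ioo_subset_Ioi_self
  · simp only [smul_eq_mul]
    fun_prop

lemma aux_split {k : ℕ} (G : (Fin (k+1) → ℂ) → ℝ≥0∞) (hG : Measurable G) :
    ∫⁻ z, G z = ∫⁻ x : ℂ, ∫⁻ y : Fin k → ℂ, G (Fin.cons x y) := by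
  rw [← (volume_preserving_piFinSuccAbove (fun _ => ℂ) (0 : Fin (k+1))).symm.lintegral_comp hG,
    Measure.volume_eq_prod, lintegral_prod]
  · refine lintegral_congr fun x => lintegral_congr fun y => congrArg G ?_
    exact Fin.insertNth_zero' x y
  · exact (hG.comp (MeasurableEquiv.measurable _)).aemeasurable

lemma aux_open (k : ℕ) : IsOpen {z : Fin k → ℂ | ∀ i, ‖z i‖ < 1} := by
  simp only [ofPred_forall]
  exact isOpen_iInter_of_finite fun i => isOpen_lt (by fun_prop) continuous_const

noncomputable def auxE {k : ℕ} (F : (Fin k → ℂ) → ℂ) : (Fin k → ℂ) → ℝ≥0∞ :=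
  {z : Fin k → ℂ | ∀ i, ‖z i‖ < 1}.indicator (fun z => ENNReal.ofReal (‖F z‖ ^ 2))

lemma aux_meas {k : ℕ} (F : (Fin k → ℂ) → ℂ)
    (hF : DifferentiableOn ℂ F {z : Fin k → ℂ | ∀ i, ‖z i‖ < 1}) : Measurable (auxE F) := by
  classical
  rw [auxE, ← Set.piecewise_eq_indicator]
  refine ContinuousOn.measurable_piecewise ?_ continuousOn_const (aux_open k).measurableSet
  exact ENNReal.continuous_ofReal.comp_continuousOn (hF.continuousOn.norm.pow 2)

lemma aux_cons {k : ℕ} (F : (Fin (k+1) → ℂ) → ℂ) (x : ℂ) (hx : ‖x‖ < 1) (y : Fin k → ℂ) :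
    auxE F (Fin.cons x y) = auxE (fun y => F (Fin.cons x y)) y := by
  have : (Fin.cons x y : Fin (k+1) → ℂ) ∈ {z : Fin (k+1) → ℂ | ∀ i, ‖z i‖ < 1} ↔
      y ∈ {z : Fin k → ℂ | ∀ i, ‖z i‖ < 1} := by
    simp [Fin.forall_fin_succ, hx]
  unfold auxE
  by_cases h : y ∈ {z : Fin k → ℂ | ∀ i, ‖z i‖ < 1}
  · rw [indicator_of_mem h, indicator_of_mem (this.2 h)]
  · rw [indicator_of_notMem h, indicator_of_notMem (fun h' => h (this.1 h'))]

lemma aux_slice {k : ℕ} (F : (Fin (k+1) → ℂ) → ℂ)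
    (hF : DifferentiableOn ℂ F {z : Fin (k+1) → ℂ | ∀ i, ‖z i‖ < 1}) (x : ℂ) (hx : ‖x‖ < 1) :
    DifferentiableOn ℂ (fun y : Fin k → ℂ => F (Fin.cons x y))
      {z : Fin k → ℂ | ∀ i, ‖z i‖ < 1} := by
  refine hF.comp (f := fun y : Fin k → ℂ => (Fin.cons x y : Fin (k+1) → ℂ)) ?_ ?_
  · refine Differentiable.differentiableOn ?_
    rw [differentiable_pi]
    refine Fin.cases ?_ fun i => ?_
    · simp
    · simp only [Fin.cons_succ]; fun_prop
  · intro y hy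
    simp only [mem_ofPred_eq] at hy ⊢
    simpa [Fin.forall_fin_succ, hx] using hy

lemma aux_slice2 {k : ℕ} (F : (Fin (k+1) → ℂ) → ℂ)
    (hF : DifferentiableOn ℂ F {z : Fin (k+1) → ℂ | ∀ i, ‖z i‖ < 1}) (y : Fin k → ℂ)
    (hy : ∀ i, ‖y i‖ < 1) :
    DifferentiableOn ℂ (fun x : ℂ => F (Fin.cons x y)) (Metric.ball 0 1) := by
  refine hF.comp (f := fun x : ℂ => (Fin.cons x y : Fin (k+1) → ℂ)) ?_ ?_
  · refine Differentiable.differentiableOn ?_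
    rw [differentiable_pi]
    refine Fin.cases ?_ fun i => ?_
    · simp only [Fin.cons_zero]; fun_prop
    · simp only [Fin.cons_succ]; fun_prop
  · intro x hx
    rw [mem_ball_zero_iff] at hx
    simp only [mem_ofPred_eq]
    simpa [Fin.forall_fin_succ, hx] using hy

lemma aux_poly (k : ℕ) : ∀ (F : (Fin k → ℂ) → ℂ)
    (_ : DifferentiableOn ℂ F {z : Fin k → ℂ | ∀ i, ‖z i‖ < 1}) (a : Fin k → ℂ)
    (_ : ∀ i, ‖a i‖ ≤ 1 / 6),
    ENNReal.ofReal (Real.pi / 3) ^ k * ENNReal.ofReal (‖F a‖ ^ 2) ≤ ∫⁻ z, auxE F z := by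
  induction k with
  | zero =>
    intro F hF a ha
    rw [volume_pi, Measure.pi_of_empty _ a, lintegral_dirac]
    simp [auxE]
  | succ k ih =>
    intro F hF a ha
    rw [aux_split _ (aux_meas F hF)]
    have hpow : ∀ w : ℂ, ENNReal.ofReal (‖w‖ ^ 2) = ‖w ^ 2‖ₑ := fun w => by
      rw [← norm_pow, ofReal_norm]
    have h1 := aux_disc (fun x => F (Fin.cons x (Fin.tail a)) ^ 2)
      ((aux_slice2 F hF (Fin.tail a) (fun i => (ha _).trans_lt (by norm_num))).pow 2) (a 0) (ha 0)
    simp only [Fin.cons_self_tail] at h1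
    calc _ = ENNReal.ofReal (Real.pi / 3) ^ k * (ENNReal.ofReal (Real.pi / 3) * ‖F a ^ 2‖ₑ) := by
          rw [pow_succ, mul_assoc, hpow]
      _ ≤ ENNReal.ofReal (Real.pi / 3) ^ k *
          ∫⁻ x in Metric.ball (0:ℂ) 1, ‖F (Fin.cons x (Fin.tail a)) ^ 2‖ₑ := by gcongr
      _ = ∫⁻ x in Metric.ball (0:ℂ) 1, ENNReal.ofReal (Real.pi / 3) ^ k *
          ENNReal.ofReal (‖F (Fin.cons x (Fin.tail a))‖ ^ 2) := by
          rw [lintegral_const_mul' _ _ (by simp)]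
          simp only [hpow]
      _ ≤ ∫⁻ x in Metric.ball (0:ℂ) 1, ∫⁻ y : Fin k → ℂ, auxE F (Fin.cons x y) := by
          refine setLIntegral_mono' Metric.isOpen_ball.measurableSet fun x hx => ?_
          rw [mem_ball_zero_iff] at hx
          simp only [aux_cons F x hx]
          exact ih _ (aux_slice F hF x hx) (Fin.tail a) (fun i => ha _)
      _ ≤ _ := setLIntegral_le_lintegral _ _

lemma aux_inj (k : ℕ) (hk : 1 ≤ k) (j : ℤ) :
    InjOn (fun t : ℂ => t ^ k) {t : ℂ | ⌈k * (t.arg + Real.pi) / (2 * Real.pi)⌉ = j} := by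
  intro s hs t ht hst
  simp only [mem_ofPred_eq] at hs ht
  simp only at hst
  have hk0 : k ≠ 0 := by lia
  have hn : ‖s‖ = ‖t‖ := by
    have := congrArg norm hst
    simp only [norm_pow] at this
    exact (pow_left_inj₀ (norm_nonneg _) (norm_nonneg _) hk0).1 this
  by_cases h0 : ‖t‖ = 0
  · rw [norm_eq_zero.1 h0]; rw [h0] at hn; exact norm_eq_zero.1 hn
  refine Complex.ext_norm_arg hn ?_
  rw [← Complex.norm_mul_exp_arg_mul_I s, ← Complex.norm_mul_exp_arg_mul_I t, mul_pow, mul_pow, hn]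
    at hst
  have h2 := mul_left_cancel₀ (pow_ne_zero k (by exact_mod_cast h0)) hst
  rw [← Complex.exp_nat_mul, ← Complex.exp_nat_mul, Complex.exp_eq_exp_iff_exists_int] at h2
  obtain ⟨n, hn⟩ := h2
  have h3 : (k:ℝ) * s.arg = k * t.arg + n * (2 * Real.pi) := by
    have := congrArg Complex.im hn
    simpa using this
  have hp : 0 < 2 * Real.pi := by positivity
  have h4 : (k:ℝ) * (s.arg + Real.pi) / (2 * Real.pi) = k * (t.arg + Real.pi) / (2 * Real.pi) + n := by
    field_simp
    linarith
  rw [h4, Int.ceil_add_intCast, ht] at hs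
  have : n = 0 := by lia
  subst this
  have hk' : (k:ℝ) ≠ 0 := by exact_mod_cast hk0
  simpa [hk0] using h3

lemma aux_det (c : ℂ) :
    ((ContinuousLinearMap.toSpanSingleton ℂ c).restrictScalars ℝ).det = ‖c‖ ^ 2 := by
  simp [ContinuousLinearMap.det, LinearMap.det_restrictScalars,
      Algebra.norm_complex_eq, Complex.normSq_eq_norm_sq]

lemma aux_power (k : ℕ) (hk : 1 ≤ k) (r : ℝ) (G : ℂ → ℝ≥0∞) :
    (k : ℝ≥0∞) * ∫⁻ t in Metric.ball (0:ℂ) r, ENNReal.ofReal (‖t‖ ^ (2 * (k - 1))) * G (t ^ k) ≤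
      ∫⁻ w, G w := by
  set S : ℤ → Set ℂ := fun j => {t : ℂ | ⌈k * (t.arg + Real.pi) / (2 * Real.pi)⌉ = j} with hS
  have hp : 0 < 2 * Real.pi := by positivity
  have hk0 : (0:ℝ) < k := by exact_mod_cast hk
  have hSm : ∀ j, MeasurableSet (S j) := fun j => by
    have : Measurable (fun t : ℂ => ⌈k * (t.arg + Real.pi) / (2 * Real.pi)⌉) := by fun_prop
    exact this (measurableSet_singleton j)
  have hcov : Metric.ball (0:ℂ) r ⊆ ⋃ j ∈ Finset.Icc (1:ℤ) k, S j := by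
    intro t _
    simp only [mem_iUnion, Finset.mem_Icc, hS, mem_ofPred_eq, exists_prop, exists_eq_right']
    have h1 := Complex.neg_pi_lt_arg t
    have h2 := Complex.arg_le_pi t
    constructor
    · rw [Int.one_le_ceil_iff]
      have : 0 < t.arg + Real.pi := by linarith
      positivity
    · rw [Int.ceil_le, div_le_iff₀ hp]
      push_cast
      gcongr
      linarith
  have hone : ∀ j, (k:ℝ≥0∞) ^ 2 * ∫⁻ t in S j, ENNReal.ofReal (‖t‖ ^ (2 * (k - 1))) * G (t ^ k) ≤
      ∫⁻ w, G w := by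
    intro j
    have := lintegral_image_eq_lintegral_abs_det_fderiv_mul volume (hSm j)
      (f := fun t : ℂ => t ^ k)
      (f' := fun t => (ContinuousLinearMap.toSpanSingleton ℂ ((k:ℂ) * t ^ (k-1))).restrictScalars ℝ)
      (fun t _ => ((hasDerivAt_pow k t).hasFDerivAt.restrictScalars ℝ).hasFDerivWithinAt)
      (aux_inj k hk j) G
    calc _ = ∫⁻ w in (fun t : ℂ => t ^ k) '' S j, G w := by
          rw [this, ← lintegral_const_mul' _ _ (by simp)]
          refine lintegral_congr fun t => ?_
          rw [aux_det, abs_of_nonneg (by positivity), norm_mul, mul_pow, norm_pow, ← pow_mul,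
            ENNReal.ofReal_mul (by positivity), mul_comm 2 (k-1), mul_assoc]
          congr 1
          simp [ENNReal.ofReal_pow]
      _ ≤ _ := setLIntegral_le_lintegral _ _
  have hsum : (k:ℝ≥0∞) ^ 2 * ∫⁻ t in Metric.ball (0:ℂ) r,
      ENNReal.ofReal (‖t‖ ^ (2 * (k - 1))) * G (t ^ k) ≤ k * ∫⁻ w, G w := by
    calc _ ≤ (k:ℝ≥0∞) ^ 2 * ∑ j ∈ Finset.Icc (1:ℤ) k, ∫⁻ t in S j,
            ENNReal.ofReal (‖t‖ ^ (2 * (k - 1))) * G (t ^ k) := by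
          gcongr
          refine (lintegral_mono_set hcov).trans ?_
          rw [lintegral_biUnion_finset _ (fun j _ => hSm j)]
          intro i _ j _ hij
          rw [Function.onFun, Set.disjoint_left]
          intro t hi hj
          exact hij (hi.symm.trans hj)
      _ ≤ ∑ j ∈ Finset.Icc (1:ℤ) k, ∫⁻ w, G w := by
          rw [Finset.mul_sum]
          exact Finset.sum_le_sum fun j _ => hone j
      _ = _ := by simp
  rw [sq, mul_assoc] at hsum
  exact (ENNReal.mul_le_mul_iff_right (by simpa using (by lia : k ≠ 0)) (by simp)).1 hsum

theorem stmt_18 (m : ℕ) (hm : 1 ≤ m) (r : ℝ) (hr0 : 0 < r) (hr1 : r ≤ 1)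
    (i₁ : ℕ) (hi₁ : 1 ≤ i₁) (g : Fin m → ℂ → ℂ)
    (hg : ∀ l, DifferentiableOn ℂ (g l) (Metric.ball 0 r))
    (hgbd : ∀ l, ∀ t ∈ Metric.ball (0 : ℂ) r, ‖g l t‖ ≤ 1 / 6)
    (F : (Fin (m + 1) → ℂ) → ℂ)
    (hF : DifferentiableOn ℂ F {z : Fin (m + 1) → ℂ | ∀ i, ‖z i‖ < 1}) :
    ENNReal.ofReal ((Real.pi / 3) ^ m * (i₁ : ℝ)) *
        ∫⁻ t in Metric.ball (0 : ℂ) r,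
          ENNReal.ofReal (‖F (Fin.cons (t ^ i₁) (fun l => g l t))‖ ^ 2 *
            ‖t‖ ^ (2 * (i₁ - 1))) ≤
      ∫⁻ z in {z : Fin (m + 1) → ℂ | ∀ i, ‖z i‖ < 1}, ENNReal.ofReal (‖F z‖ ^ 2) := by
  rw [← lintegral_indicator (aux_open _).measurableSet]
  change _ ≤ ∫⁻ z, auxE F z
  have hmE := aux_meas F hF
  rw [aux_split _ hmE]
  refine le_trans ?_ (aux_power i₁ hi₁ r _)
  rw [ENNReal.ofReal_mul (by positivity), ENNReal.ofReal_natCast, mul_comm (ENNReal.ofReal _),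
    mul_assoc, ← lintegral_const_mul' _ _ ENNReal.ofReal_ne_top]
  gcongr (i₁ : ℝ≥0∞) * ?_
  refine setLIntegral_mono' Metric.isOpen_ball.measurableSet fun t ht => ?_
  have ht' : ‖t‖ < 1 := (mem_ball_zero_iff.1 ht).trans_le hr1
  have hx : ‖t ^ i₁‖ < 1 := by
    rw [norm_pow]; exact pow_lt_one₀ (norm_nonneg _) ht' (by lia)
  simp only [aux_cons F _ hx]
  have := aux_poly m _ (aux_slice F hF _ hx) (fun l => g l t) (fun l => hgbd l t ht)
  rw [ENNReal.ofReal_mul (by positivity), ENNReal.ofReal_pow (by positivity), ← mul_assoc,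
    mul_comm]
  gcongr
end
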